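/- arXiv:2203.01533 — 6 statements merged into one kernel-verified Lean document; each statement's English description precedes it below -/
import Mathlib

section
/- Let r ≥ 1 and let M be a real symmetric r×r matrix. Then M satisfies (Hyp) if and only if M has at most one positive eigenvalue, counted with multiplicity. -/
open Matrix

/-- A real symmetric `r × r` matrix `M` satisfies (Hyp) if for all `v, w ∈ ℝ^r` with
`⟨w, M w⟩ > 0` one has `⟨v, M w⟩² ≥ ⟨v, M v⟩ · ⟨w, M w⟩`. -/
def SatisfiesHyp {r : ℕ} (M : Matrix (Fin r) (Fin r) ℝ) : Prop :=
  ∀ v w : Fin r → ℝ, 0 < w ⬝ᵥ M.mulVec w →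
    (v ⬝ᵥ M.mulVec w) ^ 2 ≥ (v ⬝ᵥ M.mulVec v) * (w ⬝ᵥ M.mulVec w)

/-- The matrix `M` has at most one positive eigenvalue, counted with multiplicity. -/
def AtMostOnePosEigenvalue {r : ℕ} (M : Matrix (Fin r) (Fin r) ℝ) : Prop :=
  ∃ hM : M.IsHermitian,
    (Finset.univ.filter fun i => 0 < hM.eigenvalues i).card ≤ 1

/-!
Work with the bilinear form `B v w = ⟨v, M w⟩` in an eigenbasis of `M`, which is orthogonal for
`B`. Two basis vectors on which `B` is positive would violate the inequality, since they are
`B`-orthogonal. Conversely, if at most one basis vector is positive, `B` is negative semidefinite on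
the kernel of a linear functional `f`. Given `v` and `w` with `B w w > 0`, the vector
`u = f w • v - f v • w` lies in that kernel, so the Gram determinant of `(u, w)` is nonpositive, and
it equals `(f w)²` times the Gram determinant of `(v, w)`.
-/

open Module

section OrthogonalBasis

variable {R V ι : Type*} [CommSemiring R] [AddCommMonoid V] [Module R V]
  {B : LinearMap.BilinForm R V}

theorem isSymm_of_isOrthoᵢ_basis (b : Basis ι R V) (hb : B.IsOrthoᵢ b) : B.IsSymm := by
  refine (LinearMap.BilinForm.isSymm_iff_basis b).mpr fun i j ↦ ?_
  obtain rfl | hij := eq_or_ne i j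
  · rfl
  · rw [hb hij, hb hij.symm]

theorem apply_self_eq_sum_of_isOrthoᵢ_basis (b : Basis ι R V) (hb : B.IsOrthoᵢ b) (x : V) :
    B x x = (b.repr x).sum fun i c ↦ c ^ 2 * B (b i) (b i) := by
  rw [← LinearMap.sum_repr_mul_repr_mul b b x x]
  simp only [Finsupp.sum, smul_eq_mul]
  refine Finset.sum_congr rfl fun i hi ↦ ?_
  refine (Finset.sum_eq_single_of_mem i hi fun j _ hji ↦ ?_).trans ?_
  · rw [hb hji.symm, mul_zero, mul_zero]
  · rw [sq, mul_assoc]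

end OrthogonalBasis

section OrderedRing

variable {R V ι : Type*} [CommRing R] [LinearOrder R] [IsStrictOrderedRing R]
  [AddCommGroup V] [Module R V] {B : LinearMap.BilinForm R V}

/-- The reverse Cauchy–Schwarz inequality for a bilinear form, as satisfied by Lorentzian forms.
It is required only when the second vector is positive; for a symmetric form the case of a positive
first vector follows by exchanging the two. -/
def ReverseCauchySchwarz (B : LinearMap.BilinForm R V) : Prop :=
  ∀ v w, 0 < B w w → B v v * B w w ≤ B v w ^ 2

namespace ReverseCauchySchwarz

theorem apply_ne_zero_of_pos (hB : ReverseCauchySchwarz B) {v w : V} (hv : 0 < B v v)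
    (hw : 0 < B w w) : B v w ≠ 0 :=
  sq_pos_iff.mp ((mul_pos hv hw).trans_le (hB v w hw))

theorem of_nonpos_of_mem_ker (hB : B.IsSymm) (f : Dual R V)
    (hf : ∀ u ∈ f.ker, B u u ≤ 0) : ReverseCauchySchwarz B := by
  intro v w hw
  have hfw : f w ≠ 0 := fun h ↦ (hf w h).not_gt hw
  let u := f w • v - f v • w
  have hu : u ∈ f.ker := by simp [u, mul_comm]
  have gram_eq : B u u * B w w - B u w ^ 2 = f w ^ 2 * (B v v * B w w - B v w ^ 2) := by
    simp only [u, map_sub, map_smul, LinearMap.sub_apply, LinearMap.smul_apply, smul_eq_mul,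
      hB.eq w v]
    ring
  have gram_nonpos : B u u * B w w - B u w ^ 2 ≤ 0 :=
    sub_nonpos.mpr ((mul_nonpos_of_nonpos_of_nonneg (hf u hu) hw.le).trans (sq_nonneg _))
  exact sub_nonpos.mp (nonpos_of_mul_nonpos_right (gram_eq ▸ gram_nonpos) (sq_pos_of_ne_zero hfw))

end ReverseCauchySchwarz

theorem apply_self_nonpos_of_isOrthoᵢ_basis (b : Basis ι R V) (hb : B.IsOrthoᵢ b) {x : V}
    (hx : ∀ i, b.repr x i ≠ 0 → B (b i) (b i) ≤ 0) : B x x ≤ 0 := by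
  rw [apply_self_eq_sum_of_isOrthoᵢ_basis b hb]
  exact Finset.sum_nonpos fun i hi ↦
    mul_nonpos_of_nonneg_of_nonpos (sq_nonneg _) (hx i (Finsupp.mem_support_iff.mp hi))

theorem exists_dual_nonpos_of_mem_ker (b : Basis ι R V) (hb : B.IsOrthoᵢ b)
    (hpos : {i | 0 < B (b i) (b i)}.Subsingleton) :
    ∃ f : Dual R V, ∀ u ∈ f.ker, B u u ≤ 0 := by
  by_cases h : ∃ k, 0 < B (b k) (b k)
  · obtain ⟨k, hk⟩ := h
    refine ⟨b.coord k, fun u hu ↦ apply_self_nonpos_of_isOrthoᵢ_basis b hb fun i hi ↦ ?_⟩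
    by_contra! hi_pos
    obtain rfl : i = k := hpos hi_pos hk
    exact hi hu
  · push Not at h
    exact ⟨0, fun u _ ↦ apply_self_nonpos_of_isOrthoᵢ_basis b hb fun i _ ↦ h i⟩

theorem reverseCauchySchwarz_iff_subsingleton_pos (b : Basis ι R V) (hb : B.IsOrthoᵢ b) :
    ReverseCauchySchwarz B ↔ {i | 0 < B (b i) (b i)}.Subsingleton := by
  constructor
  · intro hB i hi j hj
    by_contra hij
    exact hB.apply_ne_zero_of_pos hi hj (hb hij)
  · intro hpos
    obtain ⟨f, hf⟩ := exists_dual_nonpos_of_mem_ker b hb hpos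
    exact .of_nonpos_of_mem_ker (isSymm_of_isOrthoᵢ_basis b hb) f hf

end OrderedRing

section Matrix

variable {n : Type*} [Fintype n] [DecidableEq n] {M : Matrix n n ℝ}

/-- The orthonormal eigenbasis of a real symmetric matrix, as a basis of `n → ℝ` rather than of
`EuclideanSpace ℝ n`, where `Matrix.toBilin'` lives. -/
noncomputable def eigenbasis (hM : M.IsHermitian) : Basis n ℝ (n → ℝ) :=
  hM.eigenvectorBasis.toBasis.map (WithLp.linearEquiv 2 ℝ (n → ℝ))

theorem eigenbasis_apply (hM : M.IsHermitian) (i : n) :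
    eigenbasis hM i = (hM.eigenvectorBasis i).ofLp := by
  rw [eigenbasis, Basis.map_apply, OrthonormalBasis.coe_toBasis, WithLp.coe_linearEquiv]

theorem mulVec_eigenbasis (hM : M.IsHermitian) (i : n) :
    M *ᵥ eigenbasis hM i = hM.eigenvalues i • eigenbasis hM i := by
  rw [eigenbasis_apply, hM.mulVec_eigenvectorBasis]

theorem eigenbasis_dotProduct (hM : M.IsHermitian) (i j : n) :
    eigenbasis hM i ⬝ᵥ eigenbasis hM j = if i = j then 1 else 0 := by
  rw [← orthonormal_iff_ite.mp hM.eigenvectorBasis.orthonormal i j,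
    EuclideanSpace.inner_eq_star_dotProduct, star_trivial, dotProduct_comm, eigenbasis_apply,
    eigenbasis_apply]

theorem toBilin'_eigenbasis (hM : M.IsHermitian) (i j : n) :
    toBilin' M (eigenbasis hM i) (eigenbasis hM j) = if i = j then hM.eigenvalues j else 0 := by
  rw [toBilin'_apply', mulVec_eigenbasis, dotProduct_smul, eigenbasis_dotProduct, smul_eq_mul,
    mul_ite, mul_one, mul_zero]

theorem isOrthoᵢ_eigenbasis (hM : M.IsHermitian) : (toBilin' M).IsOrthoᵢ (eigenbasis hM) :=
  fun i j hij ↦ (toBilin'_eigenbasis hM i j).trans (if_neg hij)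

theorem stmt_0_general (hM : M.IsHermitian) :
    (∀ v w : n → ℝ, 0 < w ⬝ᵥ M *ᵥ w → (v ⬝ᵥ M *ᵥ v) * (w ⬝ᵥ M *ᵥ w) ≤ (v ⬝ᵥ M *ᵥ w) ^ 2) ↔
      (Finset.univ.filter fun i ↦ 0 < hM.eigenvalues i).card ≤ 1 := by
  have h := reverseCauchySchwarz_iff_subsingleton_pos _ (isOrthoᵢ_eigenbasis hM)
  simp only [toBilin'_eigenbasis, if_true] at h
  simpa only [ReverseCauchySchwarz, toBilin'_apply', Finset.card_le_one_iff_subsingleton,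
    Finset.coe_filter_univ] using h

end Matrix

theorem stmt_0 {r : ℕ} (hr : 1 ≤ r) (M : Matrix (Fin r) (Fin r) ℝ) (hM : M.IsSymm) :
    SatisfiesHyp M ↔ AtMostOnePosEigenvalue M :=
  have hM' : M.IsHermitian := (conjTranspose_eq_transpose_of_trivial M).trans hM
  (stmt_0_general hM').trans ⟨fun h ↦ ⟨hM', h⟩, fun ⟨_, h⟩ ↦ h⟩
end

section
/- (Pullback equality criterion.) Let r ≥ 1, let M be a real symmetric r×r matrix and h ∈ ℝ^r. Suppose that for each index i ∈ supp(M) there is a real symmetric r×r matrix M⟨i⟩ with supp(M⟨i⟩) ⊆ supp(M), such that: (Inh) (M v)_i = ⟨v, M⟨i⟩ h⟩ for every i ∈ supp(M) and every v ∈ ℝ^r; and (T-Inv) (M⟨i⟩)_{jk} = (M⟨j⟩)_{ki} = (M⟨k⟩)_{ij} for all i, j, k ∈ supp(M). Then Σ_{i ∈ supp(M)} h_i ⟨v, M⟨i⟩ v⟩ = ⟨v, M v⟩ for every v ∈ ℝ^r. -/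
open Matrix

open scoped Classical in
/-- The support of a matrix: the set of indices whose row is nonzero. -/
noncomputable def matrixSupp {r : ℕ} (M : Matrix (Fin r) (Fin r) ℝ) : Finset (Fin r) :=
  Finset.univ.filter fun i => M i ≠ 0

/-!
The matrices `A i`, `i ∈ S`, are the slices of a 3-tensor supported on `S × S × S`. Cyclic
invariance of its entries passes to the trilinear form `∑ i ∈ S, x i * (y ⬝ᵥ A i *ᵥ z)`. By
inheritance `v ⬝ᵥ M *ᵥ v` is the value of this form at `(v, v, h)`, and rotating the arguments
turns it into the value at `(h, v, v)`.
-/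

section RestrictedSums

variable {m n R : Type*} [Fintype m] [Fintype n] [NonUnitalNonAssocSemiring R] {S : Finset m}

theorem dotProduct_mulVec_eq_sum_of_row_support {M : Matrix m n R}
    (hM : ∀ i j, M i j ≠ 0 → i ∈ S) (u : m → R) (w : n → R) :
    u ⬝ᵥ M *ᵥ w = ∑ i ∈ S, u i * (M *ᵥ w) i := by
  refine (Finset.sum_subset S.subset_univ fun i _ hi => ?_).symm
  have row_eq_zero : M i = 0 := funext fun j => not_not.mp (mt (hM i j) hi)
  rw [mulVec, row_eq_zero, zero_dotProduct, mul_zero]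

theorem dotProduct_mulVec_eq_sum_sum_of_support {T : Finset n} {A : Matrix m n R}
    (hA : ∀ j k, A j k ≠ 0 → j ∈ S ∧ k ∈ T) (u : m → R) (w : n → R) :
    u ⬝ᵥ A *ᵥ w = ∑ j ∈ S, ∑ k ∈ T, u j * (A j k * w k) := by
  rw [dotProduct_mulVec_eq_sum_of_row_support fun j k hjk => (hA j k hjk).1]
  refine Finset.sum_congr rfl fun j _ => ?_
  rw [← Finset.mul_sum]
  refine congrArg (u j * ·) (Finset.sum_subset T.subset_univ fun k _ hk => ?_).symm
  have entry_eq_zero : A j k = 0 := not_not.mp (mt (fun hjk => (hA j k hjk).2) hk)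
  exact mul_eq_zero_of_left entry_eq_zero (w k)

end RestrictedSums

section Pullback

variable {ι R : Type*} [Fintype ι] [CommSemiring R] {S : Finset ι}

theorem sum_mul_dotProduct_mulVec_rotate {A : ι → Matrix ι ι R}
    (hA : ∀ i ∈ S, ∀ j k, A i j k ≠ 0 → j ∈ S ∧ k ∈ S)
    (hcyc : ∀ i ∈ S, ∀ j ∈ S, ∀ k ∈ S, A i j k = A j k i) (x y z : ι → R) :
    ∑ i ∈ S, x i * (y ⬝ᵥ A i *ᵥ z) = ∑ i ∈ S, y i * (z ⬝ᵥ A i *ᵥ x) := by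
  have expand (a b c : ι → R) : ∑ i ∈ S, a i * (b ⬝ᵥ A i *ᵥ c) =
      ∑ i ∈ S, ∑ j ∈ S, ∑ k ∈ S, a i * (b j * (A i j k * c k)) :=
    Finset.sum_congr rfl fun i hi => by
      simp only [dotProduct_mulVec_eq_sum_sum_of_support (hA i hi), Finset.mul_sum]
  calc ∑ i ∈ S, x i * (y ⬝ᵥ A i *ᵥ z)
      = ∑ i ∈ S, ∑ j ∈ S, ∑ k ∈ S, x i * (y j * (A i j k * z k)) := expand x y z
    _ = ∑ i ∈ S, ∑ j ∈ S, ∑ k ∈ S, y j * (z k * (A j k i * x i)) :=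
        Finset.sum_congr rfl fun i hi => Finset.sum_congr rfl fun j hj =>
          Finset.sum_congr rfl fun k hk => by rw [hcyc i hi j hj k hk]; ring
    _ = ∑ j ∈ S, ∑ k ∈ S, ∑ i ∈ S, y j * (z k * (A j k i * x i)) := by
        rw [Finset.sum_comm]
        exact Finset.sum_congr rfl fun j _ => Finset.sum_comm
    _ = ∑ j ∈ S, y j * (z ⬝ᵥ A j *ᵥ x) := (expand y z x).symm

theorem stmt_3_general {M : Matrix ι ι R} {A : ι → Matrix ι ι R} {h v : ι → R}
    (hM : ∀ i j, M i j ≠ 0 → i ∈ S)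
    (hA : ∀ i ∈ S, ∀ j k, A i j k ≠ 0 → j ∈ S ∧ k ∈ S)
    (hInh : ∀ i ∈ S, (M *ᵥ v) i = v ⬝ᵥ A i *ᵥ h)
    (hTInv : ∀ i ∈ S, ∀ j ∈ S, ∀ k ∈ S, A i j k = A j k i) :
    ∑ i ∈ S, h i * (v ⬝ᵥ A i *ᵥ v) = v ⬝ᵥ M *ᵥ v := by
  calc ∑ i ∈ S, h i * (v ⬝ᵥ A i *ᵥ v)
      = ∑ i ∈ S, v i * (v ⬝ᵥ A i *ᵥ h) := sum_mul_dotProduct_mulVec_rotate hA hTInv h v v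
    _ = ∑ i ∈ S, v i * (M *ᵥ v) i := Finset.sum_congr rfl fun i hi => by rw [hInh i hi]
    _ = v ⬝ᵥ M *ᵥ v := (dotProduct_mulVec_eq_sum_of_row_support hM v v).symm

end Pullback

section Support

variable {r : ℕ} {A : Matrix (Fin r) (Fin r) ℝ} {i j : Fin r}

theorem mem_matrixSupp_of_apply_ne_zero (hij : A i j ≠ 0) : i ∈ matrixSupp A := by
  simp only [matrixSupp, Finset.mem_filter_univ]
  exact fun row_eq_zero => hij (congrFun row_eq_zero j)

theorem mem_and_mem_of_isSymm_of_matrixSupp_subset {S : Finset (Fin r)} (hA : A.IsSymm)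
    (hS : matrixSupp A ⊆ S) (hij : A i j ≠ 0) : i ∈ S ∧ j ∈ S :=
  ⟨hS (mem_matrixSupp_of_apply_ne_zero hij),
    hS (mem_matrixSupp_of_apply_ne_zero (hA.apply i j ▸ hij))⟩

end Support

/-- The pullback equality criterion. -/
theorem stmt_3 {r : ℕ} (hr : 1 ≤ r)
    (M : Matrix (Fin r) (Fin r) ℝ) (hMsymm : M.IsSymm)
    (h : Fin r → ℝ)
    (Msub : Fin r → Matrix (Fin r) (Fin r) ℝ)
    (hMsubsymm : ∀ i ∈ matrixSupp M, (Msub i).IsSymm)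
    (hMsubsupp : ∀ i ∈ matrixSupp M, matrixSupp (Msub i) ⊆ matrixSupp M)
    (hInh : ∀ i ∈ matrixSupp M, ∀ v : Fin r → ℝ,
      M.mulVec v i = v ⬝ᵥ (Msub i).mulVec h)
    (hTInv : ∀ i ∈ matrixSupp M, ∀ j ∈ matrixSupp M, ∀ k ∈ matrixSupp M,
      Msub i j k = Msub j k i ∧ Msub j k i = Msub k i j) :
    ∀ v : Fin r → ℝ,
      ∑ i ∈ matrixSupp M, h i * (v ⬝ᵥ (Msub i).mulVec v) = v ⬝ᵥ M.mulVec v := by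
  intro v
  exact stmt_3_general (fun _ _ => mem_matrixSupp_of_apply_ne_zero)
    (fun i hi _ _ => mem_and_mem_of_isSymm_of_matrixSupp_subset (hMsubsymm i hi) (hMsubsupp i hi))
    (fun i hi => hInh i hi v) fun i hi j hj k hk => (hTInv i hi j hj k hk).1
end

section
/- (Log-concavity for matroids / weak Mason conjecture.) Let M be a matroid on a finite ground set, and let k be an integer with 1 ≤ k < rk(M). Then I(k)² ≥ (1 + 1/k) · I(k−1) · I(k+1). -/
/-- The number of independent sets of cardinality `k` in the matroid `M`. -/
noncomputable def numIndep {α : Type*} (M : Matroid α) (k : ℕ) : ℕ :=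
  {S : Set α | M.Indep S ∧ S.ncard = k}.ncard

/-- The rank of the matroid `M`: the maximal size of an independent set. -/
noncomputable def matroidRk {α : Type*} (M : Matroid α) : ℕ :=
  sSup {n : ℕ | ∃ S : Set α, M.Indep S ∧ S.ncard = n}

/-!
Enlarge the ground set by a free letter `none` of weight `ε > 0` and count weighted words whose
letters from `M` form an independent set. For a word `s`, the matrix of weighted counts of the words
of length `|s| + m + 2` extending `s` by two prescribed letters has at most one positive eigenvalue.
For `m = 0` this holds because parallelism in a contraction of `M` is an equivalence relation: up to
scaling the matrix is a rank one matrix minus blocks of rank one. The step from `m` to `m + 1` is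
Oppenheim's trickle-down argument: the matrix `A` of `s` is the sum of the matrices of its
one-letter extensions, and adding up their reverse Cauchy–Schwarz inequalities gives `t ≤ t ^ 2` for
every eigenvalue `t` of the normalised matrix `diag(A 1)⁻¹ A`. So `t ≤ 0` or `t ≥ 1`, and the
Dirichlet form shows that the latter occurs only for the constant vector.

Reverse Cauchy–Schwarz for the unit vector at `none` says that the weighted counts of words of
length `k` are log-concave in `k`. As `ε → 0` these tend to `k! * I(k)`, and the factorials turn
into the factor `1 + 1 / k`.
-/

section Hyperbolic

open Matrix

variable {ι : Type*} [Fintype ι] {A : Matrix ι ι ℝ}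

/-- The reverse Cauchy–Schwarz inequality for the symmetric form `A` against the single vector `h`.
When `h ⬝ᵥ A *ᵥ h > 0` it says that `A` has exactly one positive eigenvalue. -/
def IsHyperbolicAt (A : Matrix ι ι ℝ) (h : ι → ℝ) : Prop :=
  ∀ v, (v ⬝ᵥ A *ᵥ v) * (h ⬝ᵥ A *ᵥ h) ≤ (v ⬝ᵥ A *ᵥ h) ^ 2

lemma dotProduct_mulVec_comm_of_isSymm {R : Type*} [CommSemiring R] {A : Matrix ι ι R}
    (hA : A.IsSymm) (v w : ι → R) : v ⬝ᵥ A *ᵥ w = w ⬝ᵥ A *ᵥ v := by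
  rw [← dotProduct_transpose_mulVec, hA.eq]

lemma mulVec_one_apply {κ R : Type*} [NonAssocSemiring R] (A : Matrix κ ι R) (i : κ) :
    (A *ᵥ 1) i = ∑ j, A i j :=
  dotProduct_one (A i)

lemma IsHyperbolicAt.of_smul {c : ℝ} (hc : c ≠ 0) {h : ι → ℝ} (hA : IsHyperbolicAt (c • A) h) :
    IsHyperbolicAt A h := fun v => by
  have hv := hA v
  simp only [smul_mulVec, dotProduct_smul, smul_eq_mul] at hv
  refine le_of_mul_le_mul_left ?_ (by positivity : 0 < c ^ 2)
  linarith

lemma isHyperbolicAt_vecMulVec_sub {N : Matrix ι ι ℝ} (hN : N.PosSemidef) (ℓ : ι → ℝ)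
    {h : ι → ℝ} (hh : 0 ≤ h ⬝ᵥ (vecMulVec ℓ ℓ - N) *ᵥ h) :
    IsHyperbolicAt (vecMulVec ℓ ℓ - N) h := by
  have form (v w : ι → ℝ) :
      v ⬝ᵥ (vecMulVec ℓ ℓ - N) *ᵥ w = (ℓ ⬝ᵥ v) * (ℓ ⬝ᵥ w) - v ⬝ᵥ N *ᵥ w := by
    simp [sub_mulVec, vecMulVec_mulVec, dotProduct_sub, dotProduct_comm v ℓ, mul_comm]
  have hNsymm : N.IsSymm := by simpa [IsHermitian, IsSymm] using hN.isHermitian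
  have hN_nonneg (v : ι → ℝ) : 0 ≤ v ⬝ᵥ N *ᵥ v := by simpa using hN.dotProduct_mulVec_nonneg v
  intro v
  rw [form] at hh
  simp only [form]
  rcases eq_or_ne (ℓ ⬝ᵥ h) 0 with hℓh | hℓh
  · have hh_zero : (ℓ ⬝ᵥ h) * (ℓ ⬝ᵥ h) - h ⬝ᵥ N *ᵥ h = 0 := by
      linarith [hN_nonneg h, mul_eq_zero_of_left hℓh (ℓ ⬝ᵥ h)]
    rw [hh_zero, mul_zero]
    positivity
  · have hNu := hN_nonneg ((ℓ ⬝ᵥ h) • v - (ℓ ⬝ᵥ v) • h)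
    simp only [mulVec_sub, mulVec_smul, dotProduct_sub, sub_dotProduct, smul_dotProduct,
      dotProduct_smul, smul_eq_mul, dotProduct_mulVec_comm_of_isSymm hNsymm h v] at hNu
    refine le_of_mul_le_mul_left ?_ (by positivity : 0 < (ℓ ⬝ᵥ h) ^ 2)
    nlinarith [mul_nonneg hNu hh, sq_nonneg ((ℓ ⬝ᵥ h) * ((ℓ ⬝ᵥ v) * (ℓ ⬝ᵥ h) - v ⬝ᵥ N *ᵥ h)
      - (ℓ ⬝ᵥ v) * ((ℓ ⬝ᵥ h) * (ℓ ⬝ᵥ h) - h ⬝ᵥ N *ᵥ h))]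

lemma posSemidef_of_forall_pencil_nonneg (hA : A.IsHermitian) {d : ι → ℝ} (hd : ∀ i, 0 < d i)
    (h : ∀ (μ : ℝ) (x : ι → ℝ), x ≠ 0 → A *ᵥ x = μ • (d * x) → 0 ≤ μ) : A.PosSemidef := by
  classical
  set q : ι → ℝ := fun i => (√(d i))⁻¹ with hq
  have hq_ne (i : ι) : q i ≠ 0 := (inv_pos.2 (Real.sqrt_pos.2 (hd i))).ne'
  have hdq (i : ι) : q i * (d i * q i) = 1 := by
    have := (Real.sqrt_pos.2 (hd i)).ne'
    simp only [hq]
    field_simp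
    exact (Real.sq_sqrt (hd i).le).symm
  have hQ : IsUnit (diagonal q) := by
    rw [isUnit_diagonal, Pi.isUnit_iff]
    exact fun i => (hq_ne i).isUnit
  have hstar : star (diagonal q) = diagonal q := by simp [star_eq_conjTranspose]
  rw [← hQ.posSemidef_star_left_conjugate_iff, hstar]
  have hS : (diagonal q * A * diagonal q).IsHermitian := by
    simpa using isHermitian_conjTranspose_mul_mul (diagonal q) hA
  refine hS.posSemidef_iff_eigenvalues_nonneg.2 fun i => ?_
  have hx_ne : (hS.eigenvectorBasis i).ofLp ≠ 0 := by
    simpa using hS.eigenvectorBasis.orthonormal.ne_zero i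
  have hx := hS.mulVec_eigenvectorBasis i
  set x := (hS.eigenvectorBasis i).ofLp
  refine h _ (q * x) (fun h0 => hx_ne (funext fun j => ?_)) (funext fun j => ?_)
  · exact (mul_eq_zero.1 (congrFun h0 j)).resolve_left (hq_ne j)
  · have hQx : diagonal q *ᵥ x = q * x := funext fun j => mulVec_diagonal q x j
    have hj := congrFun hx j
    rw [← mulVec_mulVec, ← mulVec_mulVec, hQx, mulVec_diagonal, Pi.smul_apply, smul_eq_mul] at hj
    apply mul_left_cancel₀ (hq_ne j)
    simp only [Pi.smul_apply, Pi.mul_apply, smul_eq_mul]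
    linear_combination hj - hS.eigenvalues i * x j * hdq j

lemma posSemidef_of_forall_nonneg_pencil_nonneg (hA : A.IsHermitian) {d : ι → ℝ}
    (hd : ∀ i, 0 ≤ d i) (hA_zero : ∀ i, d i = 0 → A i = 0)
    (h : ∀ (μ : ℝ) (x : ι → ℝ), d * x ≠ 0 → A *ᵥ x = μ • (d * x) → 0 ≤ μ) : A.PosSemidef := by
  refine posSemidef_of_forall_pencil_nonneg hA (d := fun i => if d i = 0 then 1 else d i)
    (fun i => by split_ifs with hi <;> [exact one_pos; exact (hd i).lt_of_ne' hi])
    fun μ x hx_ne hx => ?_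
  by_contra! hμ
  have hx_zero {i : ι} (hi : d i = 0) : x i = 0 := by
    have hAi : (A *ᵥ x) i = 0 := by simp [mulVec, hA_zero i hi]
    simpa [hAi, hi, hμ.ne] using congrFun hx i
  obtain ⟨i, hi⟩ := Function.ne_iff.1 hx_ne
  refine (h μ x (Function.ne_iff.2 ⟨i, mul_ne_zero (mt hx_zero hi) hi⟩)
    (hx.trans (congrArg (μ • ·) (funext fun i => ?_)))).not_gt hμ
  rcases eq_or_ne (d i) 0 with hi | hi <;> simp [hi, hx_zero]

lemma sum_sum_mul_sub_sq {R : Type*} [CommRing R] {A : Matrix ι ι R} (hA : A.IsSymm) (x : ι → R) :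
    ∑ i, ∑ j, A i j * (x i - x j) ^ 2 = 2 * (∑ i, (A *ᵥ 1) i * x i ^ 2 - x ⬝ᵥ A *ᵥ x) := by
  have hrow : ∑ i, ∑ j, A i j * x i ^ 2 = ∑ i, (A *ᵥ 1) i * x i ^ 2 := by
    simp only [mulVec_one_apply, Finset.sum_mul]
  have hcol : ∑ i, ∑ j, A i j * x j ^ 2 = ∑ i, (A *ᵥ 1) i * x i ^ 2 := by
    rw [Finset.sum_comm, ← hrow]
    simp only [hA.apply]
  have hcross : ∑ i, ∑ j, A i j * (x i * x j) = x ⬝ᵥ A *ᵥ x := by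
    simp only [dotProduct, mulVec, Finset.mul_sum]
    exact Finset.sum_congr rfl fun i _ => Finset.sum_congr rfl fun j _ => by ring
  have hexpand (i j : ι) : A i j * (x i - x j) ^ 2 =
      A i j * x i ^ 2 + A i j * x j ^ 2 - 2 * (A i j * (x i * x j)) := by ring
  simp only [hexpand, Finset.sum_sub_distrib, Finset.sum_add_distrib, ← Finset.mul_sum, hrow, hcol,
    hcross]
  ring

lemma eq_of_sum_mul_sq_le (hA : A.IsSymm) (hA0 : ∀ i j, 0 ≤ A i j) {x : ι → ℝ}
    (hx : ∑ i, (A *ᵥ 1) i * x i ^ 2 ≤ x ⬝ᵥ A *ᵥ x) {i j : ι} (hij : A i j ≠ 0) : x i = x j := by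
  have hterm (i j : ι) : 0 ≤ A i j * (x i - x j) ^ 2 := mul_nonneg (hA0 i j) (sq_nonneg _)
  have hsum : ∑ i, ∑ j, A i j * (x i - x j) ^ 2 = 0 :=
    le_antisymm (by rw [sum_sum_mul_sub_sq hA]; linarith)
      (Finset.sum_nonneg fun i _ => Finset.sum_nonneg fun j _ => hterm i j)
  have hrow := (Finset.sum_eq_zero_iff_of_nonneg
    fun i _ => Finset.sum_nonneg fun j _ => hterm i j).1 hsum i (Finset.mem_univ i)
  have hentry := (Finset.sum_eq_zero_iff_of_nonneg fun j _ => hterm i j).1 hrow j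
    (Finset.mem_univ j)
  exact sub_eq_zero.1 (pow_eq_zero_iff two_ne_zero |>.1 ((mul_eq_zero.1 hentry).resolve_left hij))

lemma eq_zero_of_mulVec_one_eq_zero (hA0 : ∀ i j, 0 ≤ A i j) {i : ι} (hi : (A *ᵥ 1) i = 0) (j : ι) :
    A i j = 0 := by
  rw [mulVec_one_apply, Finset.sum_eq_zero_iff_of_nonneg fun j _ => hA0 i j] at hi
  exact hi j (Finset.mem_univ j)

lemma mulVec_one_nonneg (hA0 : ∀ i j, 0 ≤ A i j) (i : ι) : 0 ≤ (A *ᵥ 1) i := by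
  rw [mulVec_one_apply]
  exact Finset.sum_nonneg fun j _ => hA0 i j

lemma mul_eq_zero_of_forall_ne_zero_eq {r x : ι → ℝ} (hr : ∀ i, 0 ≤ r i) {c : ℝ}
    (hx : ∀ i, r i ≠ 0 → x i = c) (hxr : x ⬝ᵥ r = 0) : r * x = 0 := by
  have hx_mul (i : ι) : x i * r i = c * r i := by
    rcases eq_or_ne (r i) 0 with hi | hi
    · simp [hi]
    · rw [hx i hi]
  have hsum : c * ∑ i, r i = 0 := by
    rw [← hxr, dotProduct, Finset.mul_sum]
    exact Finset.sum_congr rfl fun i _ => (hx_mul i).symm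
  ext i
  rw [Pi.mul_apply, mul_comm, hx_mul, Pi.zero_apply]
  rcases mul_eq_zero.1 hsum with hc | hr_sum
  · rw [hc, zero_mul]
  · rw [(Finset.sum_eq_zero_iff_of_nonneg fun i _ => hr i).1 hr_sum i (Finset.mem_univ i), mul_zero]

lemma eigenvalue_nonpos_of_dotProduct_mulVec_le (hA : A.IsSymm) (hA0 : ∀ i j, 0 ≤ A i j) {o : ι}
    (ho : ∀ i, (A *ᵥ 1) i ≠ 0 → A i o ≠ 0) {x : ι → ℝ}
    (hle : x ⬝ᵥ A *ᵥ x ≤ ∑ i, (A *ᵥ x) i ^ 2 / (A *ᵥ 1) i) {t : ℝ}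
    (hx : A *ᵥ x = t • (A *ᵥ 1 * x)) (hx_one : x ⬝ᵥ A *ᵥ 1 = 0) (hx_ne : A *ᵥ 1 * x ≠ 0) :
    t ≤ 0 := by
  by_contra! ht
  set r := A *ᵥ 1
  have hr (i : ι) : 0 ≤ r i := mulVec_one_nonneg hA0 i
  obtain ⟨k, hk⟩ : ∃ k, r k * x k ≠ 0 := Function.ne_iff.1 hx_ne
  obtain ⟨hrk, hxk⟩ := mul_ne_zero_iff.1 hk
  have hr_pos : 0 < r k := (hr k).lt_of_ne' hrk
  have hnorm_pos : 0 < ∑ i, r i * x i ^ 2 :=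
    Finset.sum_pos' (fun i _ => mul_nonneg (hr i) (sq_nonneg _))
      ⟨k, Finset.mem_univ k, by positivity⟩
  have hquad : x ⬝ᵥ A *ᵥ x = t * ∑ i, r i * x i ^ 2 := by
    simp only [hx, dotProduct, Finset.mul_sum, Pi.smul_apply, Pi.mul_apply, smul_eq_mul]
    exact Finset.sum_congr rfl fun i _ => by ring
  have hsq : ∑ i, (A *ᵥ x) i ^ 2 / r i = t ^ 2 * ∑ i, r i * x i ^ 2 := by
    simp only [hx, Finset.mul_sum, Pi.smul_apply, Pi.mul_apply, smul_eq_mul]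
    refine Finset.sum_congr rfl fun i _ => ?_
    rcases eq_or_ne (r i) 0 with hi | hi
    · simp [hi]
    · field_simp
  have ht_one : 1 ≤ t := by
    rw [hquad, hsq, sq, mul_assoc] at hle
    exact (le_mul_iff_one_le_left (by positivity)).1 hle
  exact hx_ne (mul_eq_zero_of_forall_ne_zero_eq hr (fun i hi => eq_of_sum_mul_sq_le hA hA0
    (hquad ▸ le_mul_of_one_le_left hnorm_pos.le ht_one) (ho i hi)) hx_one)

lemma posSemidef_vecMulVec_mulVec_one_sub (hA : A.IsSymm) (hA0 : ∀ i j, 0 ≤ A i j) {o : ι}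
    (ho : ∀ i, (A *ᵥ 1) i ≠ 0 → A i o ≠ 0)
    (hle : ∀ x, x ⬝ᵥ A *ᵥ x ≤ ∑ i, (A *ᵥ x) i ^ 2 / (A *ᵥ 1) i) :
    (vecMulVec (A *ᵥ 1) (A *ᵥ 1) - (1 ⬝ᵥ A *ᵥ 1) • A).PosSemidef := by
  set r := A *ᵥ 1 with hr_def
  set κ := 1 ⬝ᵥ r with hκ_def
  set B : Matrix ι ι ℝ := vecMulVec r r - κ • A with hB_def
  have hB_mulVec (x : ι → ℝ) : B *ᵥ x = (x ⬝ᵥ r) • r - κ • A *ᵥ x := by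
    simp [hB_def, sub_mulVec, vecMulVec_mulVec, smul_mulVec, dotProduct_comm]
  have hBsymm : B.IsSymm := by simp [hB_def, IsSymm, transpose_vecMulVec, hA.eq]
  refine posSemidef_of_forall_nonneg_pencil_nonneg (by simpa [IsHermitian, IsSymm] using hBsymm)
    (mulVec_one_nonneg hA0) (fun i hi => ?_) fun μ x hx_ne hx => ?_
  · ext j
    simp [hB_def, vecMulVec_apply, eq_zero_of_mulVec_one_eq_zero hA0 hi, r, hi]
  by_contra! hμ
  have hx_one : x ⬝ᵥ r = 0 := by
    have hB_one : B *ᵥ 1 = 0 := by rw [hB_mulVec, ← hκ_def, ← hr_def, sub_self]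
    have horth : 1 ⬝ᵥ B *ᵥ x = 0 := by
      rw [dotProduct_mulVec_comm_of_isSymm hBsymm, hB_one, dotProduct_zero]
    rw [hx, dotProduct_smul, smul_eq_mul, one_dotProduct] at horth
    rw [dotProduct_comm]
    exact (mul_eq_zero.1 horth).resolve_left hμ.ne
  have hκ_pos : 0 < κ := by
    obtain ⟨i, hi⟩ := Function.ne_iff.1 hx_ne
    rw [hκ_def, one_dotProduct]
    exact Finset.sum_pos' (fun i _ => mulVec_one_nonneg hA0 i)
      ⟨i, Finset.mem_univ i, (mulVec_one_nonneg hA0 i).lt_of_ne' (left_ne_zero_of_mul hi)⟩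
  have hx_eigen : A *ᵥ x = (-μ / κ) • (r * x) := by
    rw [hB_mulVec, hx_one, zero_smul, zero_sub] at hx
    rw [neg_div, neg_smul, div_eq_inv_mul, mul_smul, ← hx, smul_neg, neg_neg,
      inv_smul_smul₀ hκ_pos.ne']
  exact (eigenvalue_nonpos_of_dotProduct_mulVec_le hA hA0 ho (hle x) hx_eigen hx_one hx_ne).not_gt
    (div_pos (neg_pos.2 hμ) hκ_pos)

lemma isHyperbolicAt_one_of_forall_dotProduct_mulVec_le (hA : A.IsSymm) (hA0 : ∀ i j, 0 ≤ A i j)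
    {o : ι} (ho : ∀ i, (A *ᵥ 1) i ≠ 0 → A i o ≠ 0)
    (hle : ∀ x, x ⬝ᵥ A *ᵥ x ≤ ∑ i, (A *ᵥ x) i ^ 2 / (A *ᵥ 1) i) : IsHyperbolicAt A 1 := by
  intro x
  have hx := (posSemidef_vecMulVec_mulVec_one_sub hA hA0 ho hle).dotProduct_mulVec_nonneg x
  simp only [star_trivial, sub_mulVec, smul_mulVec, dotProduct_sub, dotProduct_smul,
    vecMulVec_mulVec, smul_eq_mul, dotProduct_comm (A *ᵥ 1) x, MulOpposite.smul_eq_mul_unop,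
    MulOpposite.unop_op] at hx
  linarith

theorem isHyperbolicAt_one_sum {B : ι → Matrix ι ι ℝ} (hB0 : ∀ c i j, 0 ≤ B c i j)
    (hBsymm : ∀ c, (B c).IsSymm) (hBcomm : ∀ c i, B c i = B i c) {o : ι}
    (ho : ∀ i, ((∑ c, B c) *ᵥ 1) i ≠ 0 → (∑ c, B c) i o ≠ 0) (hB : ∀ c, IsHyperbolicAt (B c) 1) :
    IsHyperbolicAt (∑ c, B c) 1 := by
  set A := ∑ c, B c with hA_def
  have hrow (c : ι) : B c *ᵥ 1 = A c := by
    ext i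
    rw [mulVec_one_apply, hA_def, Matrix.sum_apply]
    exact Finset.sum_congr rfl fun j _ => by rw [← (hBsymm c).apply, hBcomm c j]
  have hA : A.IsSymm := by
    rw [IsSymm, hA_def, transpose_sum]
    exact Finset.sum_congr rfl fun c _ => hBsymm c
  have hA0 (i j : ι) : 0 ≤ A i j := by
    rw [hA_def, Matrix.sum_apply]
    exact Finset.sum_nonneg fun c _ => hB0 c i j
  refine isHyperbolicAt_one_of_forall_dotProduct_mulVec_le hA hA0 ho fun x => ?_
  calc
    x ⬝ᵥ A *ᵥ x = ∑ c, x ⬝ᵥ B c *ᵥ x := by rw [hA_def, sum_mulVec, dotProduct_sum]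
    _ ≤ ∑ c, (A *ᵥ x) c ^ 2 / (A *ᵥ 1) c := Finset.sum_le_sum fun c _ => ?_
  have hc := hB c x
  have htotal : 1 ⬝ᵥ A c = (A *ᵥ 1) c := by rw [one_dotProduct, mulVec_one_apply]
  rw [hrow, htotal, dotProduct_comm x (A c)] at hc
  rcases (mulVec_one_nonneg hA0 c).eq_or_lt with hzero | hpos
  · have hBc : B c = 0 := by
      ext i j
      refine eq_zero_of_mulVec_one_eq_zero (hB0 c) ?_ j
      rw [hrow, eq_zero_of_mulVec_one_eq_zero hA0 hzero.symm]
    simp [hBc, ← hzero]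
  · exact (le_div_iff₀ hpos).2 hc

end Hyperbolic

section ExtensionSum

open Matrix

variable {ι R : Type*} [Fintype ι] {w : Multiset ι → ℝ}

/-- The total weight of the multisets obtained from `s` by adjoining `m` letters one after another,
so that each multiset is counted once for every order in which the letters can be adjoined. -/
def extensionSum [AddCommMonoid R] (w : Multiset ι → R) : ℕ → Multiset ι → R
  | 0, s => w s
  | m + 1, s => ∑ c, extensionSum w m (c ::ₘ s)

/-- The symmetric matrix of the extension sums of `s` with two prescribed further letters; it plays
the role of the Hessian of the generating polynomial of `w`. -/
def extensionMatrix [AddCommMonoid R] (w : Multiset ι → R) (m : ℕ) (s : Multiset ι) :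
    Matrix ι ι R :=
  of fun i j => extensionSum w m (i ::ₘ j ::ₘ s)

lemma extensionMatrix_isSymm [AddCommMonoid R] (w : Multiset ι → R) (m : ℕ) (s : Multiset ι) :
    (extensionMatrix w m s).IsSymm := by
  ext i j
  simp only [extensionMatrix, transpose_apply, of_apply, Multiset.cons_swap i j]

lemma extensionMatrix_succ [AddCommMonoid R] (w : Multiset ι → R) (m : ℕ) (s : Multiset ι) :
    extensionMatrix w (m + 1) s = ∑ c, extensionMatrix w m (c ::ₘ s) := by
  ext i j
  simp only [extensionMatrix, Matrix.sum_apply, of_apply, extensionSum]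
  exact Finset.sum_congr rfl fun c _ => by rw [Multiset.cons_swap c i, Multiset.cons_swap c j]

lemma extensionMatrix_mulVec_one [NonAssocSemiring R] (w : Multiset ι → R) (m : ℕ) (s : Multiset ι)
    (i : ι) : (extensionMatrix w m s *ᵥ 1) i = extensionSum w (m + 1) (i ::ₘ s) := by
  rw [mulVec_one_apply]
  exact Finset.sum_congr rfl fun j _ => by rw [extensionMatrix, of_apply, Multiset.cons_swap]

lemma one_dotProduct_extensionMatrix_mulVec_one [NonAssocSemiring R] (w : Multiset ι → R) (m : ℕ)
    (s : Multiset ι) : 1 ⬝ᵥ extensionMatrix w m s *ᵥ 1 = extensionSum w (m + 2) s := by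
  rw [one_dotProduct]
  exact Finset.sum_congr rfl fun i _ => extensionMatrix_mulVec_one w m s i

lemma extensionSum_cons_eq_mul [NonUnitalNonAssocSemiring R] {w : Multiset ι → R} {o : ι} {ε : R}
    (ho : ∀ s, w (o ::ₘ s) = ε * w s) (m : ℕ) :
    ∀ s, extensionSum w m (o ::ₘ s) = ε * extensionSum w m s := by
  induction m with
  | zero => exact ho
  | succ m ih =>
    intro s
    rw [extensionSum, extensionSum, Finset.mul_sum]
    exact Finset.sum_congr rfl fun c _ => by rw [Multiset.cons_swap, ih]

lemma extensionSum_nonneg (hw : ∀ s, 0 ≤ w s) (m : ℕ) : ∀ s, 0 ≤ extensionSum w m s := by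
  induction m with
  | zero => exact hw
  | succ m ih => exact fun s => Finset.sum_nonneg fun c _ => ih _

lemma extensionSum_eq_zero (hdown : ∀ c s, w s = 0 → w (c ::ₘ s) = 0) (m : ℕ) :
    ∀ s, w s = 0 → extensionSum w m s = 0 := by
  induction m with
  | zero => exact fun s hs => hs
  | succ m ih => exact fun s hs => Finset.sum_eq_zero fun c _ => ih _ (hdown c s hs)

lemma extensionSum_pos (hw : ∀ s, 0 ≤ w s) {o : ι} (ho : ∀ s, 0 < w s → 0 < w (o ::ₘ s)) (m : ℕ) :
    ∀ s, 0 < w s → 0 < extensionSum w m s := by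
  induction m with
  | zero => exact fun s hs => hs
  | succ m ih =>
    exact fun s hs => Finset.sum_pos' (fun c _ => extensionSum_nonneg hw m _)
      ⟨o, Finset.mem_univ o, ih _ (ho s hs)⟩

-- The extension matrices of the multisets `c ::ₘ s` are the slices of a symmetric 3-tensor.
theorem isHyperbolicAt_extensionMatrix (hw : ∀ s, 0 ≤ w s)
    (hdown : ∀ c s, w s = 0 → w (c ::ₘ s) = 0) {o : ι} (ho : ∀ s, 0 < w s → 0 < w (o ::ₘ s))
    (hbase : ∀ s, IsHyperbolicAt (extensionMatrix w 0 s) 1) (m : ℕ) :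
    ∀ s, IsHyperbolicAt (extensionMatrix w m s) 1 := by
  induction m with
  | zero => exact hbase
  | succ m ih =>
    intro s
    rw [extensionMatrix_succ]
    refine isHyperbolicAt_one_sum (fun c i j => extensionSum_nonneg hw m _)
      (fun c => extensionMatrix_isSymm w m _) (fun c i => ?_) (o := o) (fun i hi => ?_)
      fun c => ih (c ::ₘ s)
    · ext j
      simp only [extensionMatrix, of_apply]
      rw [Multiset.cons_swap j c, Multiset.cons_swap i c, Multiset.cons_swap i j]
    · rw [← extensionMatrix_succ] at hi ⊢
      rw [extensionMatrix_mulVec_one] at hi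
      have hwi : 0 < w (i ::ₘ s) := (hw _).lt_of_ne' (mt (extensionSum_eq_zero hdown _ _) hi)
      rw [extensionMatrix, of_apply, Multiset.cons_swap]
      exact (extensionSum_pos hw ho _ _ (ho _ hwi)).ne'

theorem extensionSum_mul_extensionSum_le_sq (hw : ∀ s, 0 ≤ w s)
    (hdown : ∀ c s, w s = 0 → w (c ::ₘ s) = 0) {o : ι} {ε : ℝ} (hε : 0 < ε)
    (ho : ∀ s, w (o ::ₘ s) = ε * w s) (hbase : ∀ s, IsHyperbolicAt (extensionMatrix w 0 s) 1)
    (m : ℕ) (s : Multiset ι) :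
    extensionSum w m s * extensionSum w (m + 2) s ≤ extensionSum w (m + 1) s ^ 2 := by
  classical
  have hpos (s : Multiset ι) (hs : 0 < w s) : 0 < w (o ::ₘ s) := ho s ▸ mul_pos hε hs
  have h := isHyperbolicAt_extensionMatrix hw hdown hpos hbase m s (Pi.single o 1)
  have hdiag : Pi.single o 1 ⬝ᵥ extensionMatrix w m s *ᵥ Pi.single o 1 =
      ε ^ 2 * extensionSum w m s := by
    rw [mulVec_single_one, single_one_dotProduct, col_apply, extensionMatrix, of_apply,
      extensionSum_cons_eq_mul ho, extensionSum_cons_eq_mul ho]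
    ring
  rw [hdiag, one_dotProduct_extensionMatrix_mulVec_one, single_one_dotProduct,
    extensionMatrix_mulVec_one, extensionSum_cons_eq_mul ho, mul_pow, mul_assoc] at h
  exact le_of_mul_le_mul_left h (by positivity)

lemma continuous_extensionSum [AddCommMonoid R] [TopologicalSpace R] [ContinuousAdd R] {X : Type*}
    [TopologicalSpace X] {w : X → Multiset ι → R} (hw : ∀ s, Continuous fun x => w x s) (m : ℕ) :
    ∀ s, Continuous fun x => extensionSum (w x) m s := by
  induction m with
  | zero => exact hw
  | succ m ih => exact fun s => continuous_finsetSum _ fun c _ => ih _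

lemma sum_sum_powersetCard_cons [NonAssocSemiring R] (f : Multiset ι → R)
    (hf : ∀ t, ¬ t.Nodup → f t = 0) (k : ℕ) :
    ∑ c, ∑ T ∈ Finset.univ.powersetCard k, f (c ::ₘ T.val) =
      (k + 1) * ∑ T ∈ Finset.univ.powersetCard (k + 1), f T.val := by
  classical
  have hslice (c : ι) : ∑ T ∈ Finset.univ.powersetCard k, f (c ::ₘ T.val) =
      ∑ T ∈ Finset.univ.powersetCard (k + 1), if c ∈ T then f T.val else 0 := by
    rw [← Finset.sum_filter]
    refine (Finset.sum_of_injOn (fun T => T.erase c) ?_ ?_ ?_ ?_).symm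
    · exact (Finset.erase_injOn' c).mono fun T hT => (Finset.mem_filter.1 hT).2
    · intro T hT
      simp_all
    · intro T hT hT_not
      refine hf _ fun hnodup => hT_not ⟨insert c T, ?_, ?_⟩
      all_goals simp_all
    · intro T hT
      simp_all
  calc
    ∑ c, ∑ T ∈ Finset.univ.powersetCard k, f (c ::ₘ T.val)
      = ∑ T ∈ Finset.univ.powersetCard (k + 1), ∑ c, if c ∈ T then f T.val else 0 := by
        rw [Finset.sum_congr rfl fun c _ => hslice c, Finset.sum_comm]
    _ = ∑ T ∈ Finset.univ.powersetCard (k + 1), (k + 1) * f T.val := by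
        refine Finset.sum_congr rfl fun T hT => ?_
        rw [Finset.sum_ite_mem, Finset.univ_inter, Finset.sum_const,
          (Finset.mem_powersetCard.1 hT).2, nsmul_eq_mul, Nat.cast_succ]
    _ = (k + 1) * ∑ T ∈ Finset.univ.powersetCard (k + 1), f T.val := Finset.mul_sum _ _ _ |>.symm

lemma extensionSum_eq_factorial_mul_sum [CommSemiring R] {w : Multiset ι → R}
    (hw : ∀ t, ¬ t.Nodup → w t = 0) (k : ℕ) (s : Multiset ι) :
    extensionSum w k s = k.factorial * ∑ T ∈ Finset.univ.powersetCard k, w (T.val + s) := by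
  classical
  induction k generalizing s with
  | zero => simp [extensionSum]
  | succ k ih =>
    have hws (t : Multiset ι) (ht : ¬ t.Nodup) : w (t + s) = 0 :=
      hw _ fun h => ht (Multiset.nodup_of_le (Multiset.le_add_right t s) h)
    have hcons := sum_sum_powersetCard_cons (fun t => w (t + s)) hws k
    simp only [extensionSum, ih, ← Finset.mul_sum, Multiset.add_cons, ← Multiset.cons_add, hcons,
      Nat.factorial_succ]
    push_cast
    ring

end ExtensionSum

section Matroid

open Matrix

variable {α : Type*} {M : Matroid α}

lemma numIndep_restrictSubtype_ground (M : Matroid α) (k : ℕ) :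
    numIndep (M.restrictSubtype M.E) k = numIndep M k := by
  rw [numIndep, numIndep, ← Set.ncard_image_of_injective _ Subtype.val_injective.image_injective]
  congr 1
  ext S
  constructor
  · rintro ⟨T, ⟨hT, hcard⟩, rfl⟩
    exact ⟨by simpa using hT, by rwa [Set.ncard_image_of_injective _ Subtype.val_injective]⟩
  · rintro ⟨hS, hcard⟩
    lift S to Set M.E using hS.subset_ground
    refine ⟨S, ⟨by simpa using hS, ?_⟩, rfl⟩
    rwa [Set.ncard_image_of_injective _ Subtype.val_injective] at hcard

/-- Independence of a multiset: no repeated element, and an independent underlying set. -/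
def IsIndepMultiset (M : Matroid α) (s : Multiset α) : Prop :=
  s.Nodup ∧ M.Indep {a | a ∈ s}

lemma isIndepMultiset_cons {a : α} {s : Multiset α} :
    IsIndepMultiset M (a ::ₘ s) ↔
      IsIndepMultiset M s ∧ a ∉ s ∧ M.Indep (insert a {x | x ∈ s}) := by
  have hset : {x | x ∈ a ::ₘ s} = insert a {x | x ∈ s} := by
    ext x
    simp
  rw [IsIndepMultiset, IsIndepMultiset, hset, Multiset.nodup_cons]
  exact ⟨fun h => ⟨⟨h.1.2, h.2.subset (Set.subset_insert _ _)⟩, h.1.1, h.2⟩,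
    fun h => ⟨⟨h.2.1, h.1.1⟩, h.2.2⟩⟩

lemma isIndepMultiset_cons_cons {a b : α} {s : Multiset α} (ha : IsIndepMultiset M (a ::ₘ s))
    (hb : IsIndepMultiset M (b ::ₘ s)) :
    IsIndepMultiset M (a ::ₘ b ::ₘ s) ↔
      M.closure (insert a {x | x ∈ s}) ≠ M.closure (insert b {x | x ∈ s}) := by
  have hset : {x | x ∈ b ::ₘ s} = insert b {x | x ∈ s} := by
    ext x
    simp
  obtain ⟨hs, ha_mem, ha_indep⟩ := isIndepMultiset_cons.1 ha
  have hb_indep := (isIndepMultiset_cons.1 hb).2.2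
  have ha_ground : a ∈ M.E := ha_indep.subset_ground (Set.mem_insert _ _)
  have hmem : IsIndepMultiset M (a ::ₘ b ::ₘ s) ↔ a ∉ M.closure (insert b {x | x ∈ s}) := by
    rw [isIndepMultiset_cons, hb_indep.notMem_closure_iff ha_ground, ← hset]
    exact ⟨fun h => ⟨h.2.2, h.2.1⟩, fun h => ⟨hb, h.2, h.1⟩⟩
  rw [hmem, not_iff_not]
  refine ⟨fun h => M.closure_insert_congr ⟨h, ?_⟩, fun h => ?_⟩
  · rw [hs.2.notMem_closure_iff ha_ground]
    exact ⟨ha_indep, ha_mem⟩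
  · rw [← h]
    exact M.mem_closure_of_mem (Set.mem_insert _ _) ha_indep.subset_ground

open Classical in
/-- The weight of a word in the elements of `M` and one extra letter `none`: the extra letter may be
repeated freely at cost `ε`, and the other letters must form an independent multiset. -/
noncomputable def indepWeight (M : Matroid α) (ε : ℝ) (s : Multiset (Option α)) : ℝ :=
  if IsIndepMultiset M (s.filterMap id) then ε ^ s.count none else 0

lemma indepWeight_cons_none (M : Matroid α) (ε : ℝ) (s : Multiset (Option α)) :
    indepWeight M ε (none ::ₘ s) = ε * indepWeight M ε s := by
  classical
  simp [indepWeight, pow_succ']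

open Classical in
lemma indepWeight_cons_some (M : Matroid α) (ε : ℝ) (a : α) (s : Multiset (Option α)) :
    indepWeight M ε (some a ::ₘ s) =
      if IsIndepMultiset M (a ::ₘ s.filterMap id) then indepWeight M ε s else 0 := by
  by_cases ha : IsIndepMultiset M (a ::ₘ s.filterMap id)
  · simp [indepWeight, ha, (isIndepMultiset_cons.1 ha).1]
  · simp [indepWeight, ha]

lemma indepWeight_nonneg (M : Matroid α) {ε : ℝ} (hε : 0 ≤ ε) (s : Multiset (Option α)) :
    0 ≤ indepWeight M ε s := by
  unfold indepWeight
  split_ifs <;> positivity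

lemma indepWeight_cons_eq_zero (ε : ℝ) (c : Option α) {s : Multiset (Option α)}
    (hs : indepWeight M ε s = 0) : indepWeight M ε (c ::ₘ s) = 0 := by
  cases c with
  | none => rw [indepWeight_cons_none, hs, mul_zero]
  | some a => rw [indepWeight_cons_some, hs, ite_self]

open Classical in
lemma indepWeight_mul_indepWeight_cons_cons (M : Matroid α) (ε : ℝ) (a b : α)
    (s : Multiset (Option α)) :
    indepWeight M ε s * indepWeight M ε (some a ::ₘ some b ::ₘ s) =
      if M.closure (insert a {x | x ∈ s.filterMap id}) =
          M.closure (insert b {x | x ∈ s.filterMap id})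
      then 0 else indepWeight M ε (some a ::ₘ s) * indepWeight M ε (some b ::ₘ s) := by
  have hfilterMap : (some b ::ₘ s).filterMap id = b ::ₘ s.filterMap id := by simp
  by_cases ha : IsIndepMultiset M (a ::ₘ s.filterMap id)
  swap
  · have hab : ¬ IsIndepMultiset M (a ::ₘ b ::ₘ s.filterMap id) := fun h =>
      ha (isIndepMultiset_cons.1 (Multiset.cons_swap a b _ ▸ h)).1
    simp [indepWeight_cons_some, hfilterMap, ha, hab]
  by_cases hb : IsIndepMultiset M (b ::ₘ s.filterMap id)
  swap
  · simp [indepWeight_cons_some, hb]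
  simp [indepWeight_cons_some, hfilterMap, ha, hb, isIndepMultiset_cons_cons ha hb]

lemma continuous_indepWeight (M : Matroid α) (s : Multiset (Option α)) :
    Continuous fun ε => indepWeight M ε s := by
  unfold indepWeight
  split_ifs
  · exact continuous_pow _
  · exact continuous_const

lemma indepWeight_zero_of_none_mem (M : Matroid α) {s : Multiset (Option α)} (hs : none ∈ s) :
    indepWeight M 0 s = 0 := by
  classical
  simp [indepWeight, hs]

open Classical in
lemma indepWeight_map_some (M : Matroid α) (ε : ℝ) (t : Multiset α) :
    indepWeight M ε (t.map some) = if IsIndepMultiset M t then 1 else 0 := by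
  have hcount : (t.map some).count none = 0 := by simp
  rw [indepWeight, hcount, pow_zero, Multiset.filterMap_map]
  simp [Multiset.filterMap_some]

lemma indepWeight_zero_of_not_nodup (M : Matroid α) {s : Multiset (Option α)} (hs : ¬ s.Nodup) :
    indepWeight M 0 s = 0 := by
  classical
  by_cases hnone : none ∈ s
  · exact indepWeight_zero_of_none_mem M hnone
  have : CanLift (Option α) α some (· ≠ none) := ⟨fun _ => Option.ne_none_iff_exists.1⟩
  lift s to Multiset α using fun c hc => ne_of_mem_of_not_mem hc hnone
  rw [indepWeight_map_some, if_neg]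
  exact fun h => hs (h.1.map (Option.some_injective α))

variable [Fintype α]

-- The blocks of `N` are the parallel classes of the contraction of `M` by the letters of `s`.
lemma exists_posSemidef_smul_extensionMatrix_indepWeight (M : Matroid α) (ε : ℝ)
    (s : Multiset (Option α)) :
    ∃ (ℓ : Option α → ℝ) (N : Matrix (Option α) (Option α) ℝ), N.PosSemidef ∧
      indepWeight M ε s • extensionMatrix (indepWeight M ε) 0 s = vecMulVec ℓ ℓ - N := by
  classical
  let ℓ (i : Option α) : ℝ := indepWeight M ε (i ::ₘ s)
  let z (i : Option α) : ℝ := i.elim 0 fun a => ℓ (some a)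
  have hz_none : z none = 0 := rfl
  let flat (i : Option α) : Set α := M.closure {x | x ∈ (i ::ₘ s).filterMap id}
  have hflat (a : α) : flat (some a) = M.closure (insert a {x | x ∈ s.filterMap id}) := by
    refine congrArg M.closure (Set.ext fun x => ?_)
    simp
  let N := diagonal z * (1 : Matrix (Set α) (Set α) ℝ).submatrix flat flat * diagonal z
  have hN : N.PosSemidef := by
    simpa using (PosSemidef.one.submatrix flat).conjTranspose_mul_mul_same (diagonal z)
  have hN_apply (i j : Option α) : N i j = z i * (if flat i = flat j then 1 else 0) * z j := by
    simp only [N, mul_diagonal, diagonal_mul, submatrix_apply, one_apply]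
  refine ⟨ℓ, N, hN, ?_⟩
  ext i j
  change indepWeight M ε s * indepWeight M ε (i ::ₘ j ::ₘ s) = ℓ i * ℓ j - N i j
  rw [hN_apply]
  obtain _ | a := i
  · simp only [ℓ, hz_none, indepWeight_cons_none, zero_mul, sub_zero]
    ring
  obtain _ | b := j
  · simp only [ℓ, hz_none, Multiset.cons_swap (some a), indepWeight_cons_none, mul_zero, sub_zero]
    ring
  rw [indepWeight_mul_indepWeight_cons_cons, hflat, hflat]
  split_ifs <;> simp [z, ℓ]

lemma isHyperbolicAt_extensionMatrix_indepWeight (M : Matroid α) {ε : ℝ} (hε : 0 ≤ ε)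
    (s : Multiset (Option α)) : IsHyperbolicAt (extensionMatrix (indepWeight M ε) 0 s) 1 := by
  rcases eq_or_ne (indepWeight M ε s) 0 with hs | hs
  · have hzero : extensionMatrix (indepWeight M ε) 0 s = 0 := by
      ext i j
      exact indepWeight_cons_eq_zero ε i (indepWeight_cons_eq_zero ε j hs)
    intro v
    simp [hzero]
  · obtain ⟨ℓ, N, hN, heq⟩ := exists_posSemidef_smul_extensionMatrix_indepWeight M ε s
    refine IsHyperbolicAt.of_smul hs (heq ▸ isHyperbolicAt_vecMulVec_sub hN ℓ ?_)
    rw [← heq, smul_mulVec, dotProduct_smul, one_dotProduct_extensionMatrix_mulVec_one]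
    exact mul_nonneg (indepWeight_nonneg M hε s) (extensionSum_nonneg (indepWeight_nonneg M hε) _ _)

lemma extensionSum_indepWeight_mul_le_sq (M : Matroid α) {ε : ℝ} (hε : 0 ≤ ε) (m : ℕ)
    (s : Multiset (Option α)) :
    extensionSum (indepWeight M ε) m s * extensionSum (indepWeight M ε) (m + 2) s ≤
      extensionSum (indepWeight M ε) (m + 1) s ^ 2 := by
  have hpos {δ : ℝ} (hδ : 0 < δ) :=
    extensionSum_mul_extensionSum_le_sq (indepWeight_nonneg M hδ.le)
      (fun c _ => indepWeight_cons_eq_zero δ c) hδ (indepWeight_cons_none M δ)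
      (isHyperbolicAt_extensionMatrix_indepWeight M hδ.le) m s
  rcases hε.eq_or_lt with rfl | hε
  · have hcont (n : ℕ) := continuous_extensionSum (continuous_indepWeight M) n s
    exact le_of_tendsto_of_tendsto
      ((((hcont m).mul (hcont (m + 2))).tendsto 0).mono_left nhdsWithin_le_nhds)
      ((((hcont (m + 1)).pow 2).tendsto 0).mono_left nhdsWithin_le_nhds)
      (Filter.eventually_of_mem (self_mem_nhdsWithin (s := Set.Ioi 0)) fun δ => hpos)
  · exact hpos hε

lemma numIndep_eq_card_filter (M : Matroid α) [DecidablePred fun T : Finset α => M.Indep T]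
    (k : ℕ) :
    numIndep M k = ((Finset.univ.powersetCard k).filter fun T : Finset α => M.Indep T).card := by
  classical
  rw [numIndep, ← Set.ncard_coe_finset, ← Set.ncard_image_of_injective _ Finset.coe_injective]
  congr 1
  ext S
  lift S to Finset α using S.toFinite
  simp [and_comm]

lemma extensionSum_indepWeight_zero (M : Matroid α) (k : ℕ) :
    extensionSum (indepWeight M 0) k 0 = k.factorial * numIndep M k := by
  classical
  rw [extensionSum_eq_factorial_mul_sum fun t => indepWeight_zero_of_not_nodup M,
    numIndep_eq_card_filter, Finset.card_filter, Nat.cast_sum]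
  refine congrArg _ (Finset.sum_of_injOn (Finset.map Function.Embedding.some) ?_ ?_ ?_ ?_).symm
  · exact (Finset.map_injective _).injOn
  · intro T hT
    simpa using hT
  · intro T hT hT_image
    rw [add_zero]
    refine indepWeight_zero_of_none_mem M (by_contra fun hnone => hT_image ⟨T.eraseNone, ?_, ?_⟩)
    · simpa [Finset.card_eraseNone_of_not_mem hnone] using hT
    · simp [Finset.erase_eq_of_notMem hnone]
  · intro T _
    simp [indepWeight_map_some, IsIndepMultiset, T.nodup]

end Matroid

theorem stmt_4_general {α : Type*} (M : Matroid α) [M.Finite] {k : ℕ} (hk : 1 ≤ k) :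
    ((numIndep M k : ℝ)) ^ 2 ≥
      (1 + 1 / (k : ℝ)) * (numIndep M (k - 1) : ℝ) * (numIndep M (k + 1) : ℝ) := by
  obtain ⟨m, rfl⟩ := Nat.exists_eq_add_of_le' hk
  have := M.ground_finite.fintype
  have h := extensionSum_indepWeight_mul_le_sq (M.restrictSubtype M.E) le_rfl m 0
  simp only [extensionSum_indepWeight_zero, numIndep_restrictSubtype_ground,
    Nat.factorial_succ] at h
  rw [Nat.add_sub_cancel, add_assoc m 1 1, one_add_one_eq_two]
  push_cast at h ⊢
  field_simp
  refine le_of_mul_le_mul_left ?_ (by positivity : (0 : ℝ) < (m + 1) * m.factorial ^ 2)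
  linarith

/-- Log-concavity for matroids (weak Mason conjecture). -/
theorem stmt_4 {α : Type*} [Fintype α] (M : Matroid α) (hE : M.E = Set.univ)
    (k : ℕ) (hk : 1 ≤ k) (hk' : k < matroidRk M) :
    ((numIndep M k : ℝ)) ^ 2 ≥
      (1 + 1 / (k : ℝ)) * (numIndep M (k - 1) : ℝ) * (numIndep M (k + 1) : ℝ) :=
  stmt_4_general M hk
end

section
/- Let r ≥ 1 and let B be the (r+1)×(r+1) real symmetric matrix with B_{ii} = 0 for 1 ≤ i ≤ r, B_{(r+1)(r+1)} = 1, and all other entries equal to 1. Then det(B) = (−1)^r and B has exactly one positive eigenvalue, counted with multiplicity. -/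
open Matrix

/-- The matrix `M` has exactly one positive eigenvalue, counted with multiplicity. -/
def ExactlyOnePosEigenvalue {m : Type*} [Fintype m] [DecidableEq m]
    (M : Matrix m m ℝ) : Prop :=
  ∃ hM : M.IsHermitian,
    (Finset.univ.filter fun i => 0 < hM.eigenvalues i).card = 1

/-!
The quadratic form of `B` is the square of the sum of all coordinates minus the squares of all
coordinates but the last. Hence `B = Sᵀ D S`, where `S` is the identity matrix with its last row
replaced by ones and `D = diag(-1, …, -1, 1)`. Since `det S = 1`, the determinant of `B` is that of
`D`, and by Sylvester's law of inertia `B` has as many positive eigenvalues as `D`.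
-/

section Congruence

variable {n R : Type*} [Fintype n] [DecidableEq n] [CommRing R]

theorem toQuadraticForm'_apply (A : Matrix n n R) (x : n → R) :
    A.toQuadraticForm' x = x ⬝ᵥ A *ᵥ x :=
  toLinearMap₂'_apply' A x x

theorem toQuadraticForm'_diagonal (w : n → R) :
    (diagonal w).toQuadraticForm' = QuadraticMap.weightedSumSquares R w := by
  ext x
  simp only [toQuadraticForm'_apply, QuadraticMap.weightedSumSquares_apply, dotProduct,
    mulVec_diagonal, smul_eq_mul]
  exact Finset.sum_congr rfl fun i _ => mul_left_comm _ _ _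

theorem toQuadraticForm'_transpose_mul_mul (A S : Matrix n n R) :
    (Sᵀ * A * S).toQuadraticForm' = A.toQuadraticForm'.comp S.toLin' := by
  ext x
  rw [QuadraticMap.comp_apply, toQuadraticForm'_apply, toQuadraticForm'_apply, toLin'_apply,
    ← mulVec_mulVec, ← mulVec_mulVec, dotProduct_mulVec, vecMul_transpose]

theorem equivalent_toQuadraticForm'_transpose_mul_mul (A : Matrix n n R) {S : Matrix n n R}
    (hS : IsUnit S) :
    (Sᵀ * A * S).toQuadraticForm'.Equivalent A.toQuadraticForm' := by
  obtain ⟨_⟩ := hS.nonempty_invertible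
  rw [toQuadraticForm'_transpose_mul_mul]
  exact ⟨(QuadraticMap.isometryEquivOfCompLinearEquiv _ (S.toLinearEquiv' ‹_›)).symm⟩

theorem det_one_updateRow (i₀ : n) (u : n → R) :
    ((1 : Matrix n n R).updateRow i₀ u).det = u i₀ := by
  rw [← cramer_transpose_apply, transpose_one, cramer_one, Module.End.one_apply]

theorem transpose_mul_diagonal_mul_one_updateRow (i₀ : n) (u w : n → R) :
    ((1 : Matrix n n R).updateRow i₀ u)ᵀ * diagonal w * (1 : Matrix n n R).updateRow i₀ u =
      diagonal (Function.update w i₀ 0) + w i₀ • vecMulVec u u := by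
  set S := (1 : Matrix n n R).updateRow i₀ u with hS
  ext i j
  have hterm (k : n) : S k i * w k * S k j =
      (1 : Matrix n n R) k i * Function.update w i₀ 0 k * (1 : Matrix n n R) k j +
        if k = i₀ then w i₀ * (u i * u j) else 0 := by
    obtain rfl | hk := eq_or_ne k i₀
    · simp only [hS, updateRow_self, Function.update_self, if_true]
      ring
    · simp only [hS, updateRow_ne hk, Function.update_of_ne hk, if_neg hk, add_zero]
  have hdiag : ∑ k, (1 : Matrix n n R) k i * Function.update w i₀ 0 k * (1 : Matrix n n R) k j =
      diagonal (Function.update w i₀ 0) i j := by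
    obtain rfl | hij := eq_or_ne i j
    · simp [one_apply]
    · simp [one_apply, hij, hij.symm]
  simp only [mul_apply (M := Sᵀ * diagonal w), mul_diagonal, transpose_apply, hterm,
    Finset.sum_add_distrib, hdiag, Finset.sum_ite_eq', Finset.mem_univ, if_true, Matrix.add_apply,
    Matrix.smul_apply, vecMulVec_apply, smul_eq_mul]

end Congruence

theorem sigPos_toQuadraticForm'_transpose_mul_diagonal_mul {n K : Type*} [Fintype n]
    [DecidableEq n] [Field K] [LinearOrder K] [IsStrictOrderedRing K] {S : Matrix n n K}
    (hS : IsUnit S) (w : n → K) :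
    sigPos (Sᵀ * diagonal w * S).toQuadraticForm' =
      (Finset.univ.filter fun i => 0 < w i).card := by
  have hequiv := equivalent_toQuadraticForm'_transpose_mul_mul (diagonal w) hS
  rw [toQuadraticForm'_diagonal] at hequiv
  rw [QuadraticForm.sigPos_of_equiv_weightedSumSquares hequiv, ← Set.ncard_coe_finset,
    Finset.coe_filter_univ]

section Inertia

variable {n : Type*} [Fintype n] [DecidableEq n]

theorem sigPos_toQuadraticForm'_eq_card_pos_eigenvalues {A : Matrix n n ℝ} (hA : A.IsHermitian) :
    sigPos A.toQuadraticForm' = (Finset.univ.filter fun i => 0 < hA.eigenvalues i).card := by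
  let U : Matrix n n ℝ := hA.eigenvectorUnitary
  have hspectral : A = Uᵀᵀ * diagonal hA.eigenvalues * Uᵀ := by
    simpa [Unitary.conjStarAlgAut_apply, star_eq_conjTranspose] using hA.spectral_theorem
  have hU : IsUnit Uᵀ := (Matrix.isUnit_transpose _).mpr Unitary.isUnit_coe
  conv_lhs => rw [hspectral]
  exact sigPos_toQuadraticForm'_transpose_mul_diagonal_mul hU hA.eigenvalues

theorem card_pos_eigenvalues_transpose_mul_diagonal_mul {S : Matrix n n ℝ} (hS : IsUnit S)
    (w : n → ℝ) (hM : (Sᵀ * diagonal w * S).IsHermitian) :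
    (Finset.univ.filter fun i => 0 < hM.eigenvalues i).card =
      (Finset.univ.filter fun i => 0 < w i).card := by
  rw [← sigPos_toQuadraticForm'_eq_card_pos_eigenvalues,
    sigPos_toQuadraticForm'_transpose_mul_diagonal_mul hS]

theorem exactlyOnePosEigenvalue_transpose_mul_diagonal_mul {S : Matrix n n ℝ} (hS : IsUnit S)
    {w : n → ℝ} (hw : (Finset.univ.filter fun i => 0 < w i).card = 1) :
    ExactlyOnePosEigenvalue (Sᵀ * diagonal w * S) :=
  have hM := isHermitian_conjTranspose_mul_mul S (isHermitian_diagonal w)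
  ⟨hM, (card_pos_eigenvalues_transpose_mul_diagonal_mul hS w hM).trans hw⟩

end Inertia

theorem stmt_9 {r : ℕ} (hr : 1 ≤ r)
    (B : Matrix (Fin (r + 1)) (Fin (r + 1)) ℝ)
    (hB : ∀ i j : Fin (r + 1),
      B i j = if i = j then (if (i : ℕ) < r then 0 else 1) else 1) :
    B.det = (-1) ^ r ∧ ExactlyOnePosEigenvalue B := by
  let S : Matrix (Fin (r + 1)) (Fin (r + 1)) ℝ := (1 : Matrix _ _ ℝ).updateRow (Fin.last r) 1
  let w : Fin (r + 1) → ℝ := Function.update (-1) (Fin.last r) 1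
  have hBS : B = Sᵀ * diagonal w * S := by
    rw [transpose_mul_diagonal_mul_one_updateRow]
    ext i j
    induction i using Fin.lastCases with
    | last => simp [hB, w, diagonal_apply]
    | cast i =>
      obtain rfl | hij := eq_or_ne i.castSucc j
      · simp [hB, w]
      · simp [hB, w, hij]
  have hS : S.det = 1 := det_one_updateRow _ _
  have hw : (Finset.univ.filter fun i => 0 < w i) = {Fin.last r} := by
    ext i
    induction i using Fin.lastCases <;> simp [w]
  refine ⟨?_, hBS ▸ exactlyOnePosEigenvalue_transpose_mul_diagonal_mul ?_ ?_⟩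
  · simp [hBS, hS, w, Fin.prod_univ_castSucc]
  · simp [isUnit_iff_isUnit_det, hS]
  · simp [hw]
end

section
/- (Brunn–Minkowski inequality for brick regions.) Let A and B be brick regions in the plane. Then √(area(A + B)) ≥ √(area(A)) + √(area(B)). -/
open MeasureTheory
open scoped Pointwise

/-- A brick: an axis-parallel rectangle `[x₁, x₂] × [y₁, y₂]` with `x₁ < x₂`, `y₁ < y₂`. -/
def IsBrick (R : Set (ℝ × ℝ)) : Prop :=
  ∃ x₁ x₂ y₁ y₂ : ℝ, x₁ < x₂ ∧ y₁ < y₂ ∧ R = Set.Icc x₁ x₂ ×ˢ Set.Icc y₁ y₂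

/-- A brick region: a union of finitely many (at least one) bricks whose interiors
are pairwise disjoint. -/
def IsBrickRegion (A : Set (ℝ × ℝ)) : Prop :=
  ∃ (N : ℕ) (R : Fin N → Set (ℝ × ℝ)), 0 < N ∧ (∀ i, IsBrick (R i)) ∧
    (∀ i j, i ≠ j → interior (R i) ∩ interior (R j) = ∅) ∧ A = ⋃ i, R i

/-!
On the line, Brunn–Minkowski holds because `X + min Y` and `max X + Y` are two subsets of `X + Y`
meeting in at most one point. In the plane, let `a` and `b` be the suprema of the slice measures of
`A` and `B`. The one-dimensional inequality applied to slices shows that the slice measure of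
`A + B`, divided by `a + b`, dominates at `x + y` the smaller of the slice measures of `A` at `x`
and of `B` at `y`, divided by `a` and `b`. These normalized functions have the same supremum `1`,
so for `0 < t < 1` their superlevel sets are nonempty and the one-dimensional inequality applies to
them as well; integrating over `t` yields `|A| / a + |B| / b ≤ |A + B| / (a + b)`. Finally
`(√|A| + √|B|)² / (a + b) ≤ |A| / a + |B| / b` by Cauchy–Schwarz.
-/

open Set
open scoped ENNReal

lemma measure_le_measure_add_of_nonempty_left {G : Type*} [AddGroup G] [MeasurableSpace G]
    {μ : Measure G} [μ.IsAddLeftInvariant] {A B : Set G} (hA : A.Nonempty) : μ B ≤ μ (A + B) := by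
  obtain ⟨a, ha⟩ := hA
  calc μ B = μ (a +ᵥ B) := (measure_vadd μ a B).symm
    _ ≤ μ (A + B) := measure_mono (vadd_set_subset_add ha)

lemma isLUB_range_div_self {α 𝕜 : Type*} [Field 𝕜] [LinearOrder 𝕜] [IsStrictOrderedRing 𝕜]
    {f : α → 𝕜} {a : 𝕜} (ha : 0 < a) (h : IsLUB (range f) a) :
    IsLUB (range fun x => f x / a) 1 := by
  simpa [← range_comp, Function.comp_def, div_self ha.ne'] using
    (OrderIso.divRight₀ a ha).isLUB_image'.2 h

lemma sq_add_le_of_sq_div_add_sq_div_le {𝕜 : Type*} [Field 𝕜] [LinearOrder 𝕜]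
    [IsStrictOrderedRing 𝕜] {a b p q r : 𝕜} (ha : 0 < a) (hb : 0 < b)
    (h : p ^ 2 / a + q ^ 2 / b ≤ r / (a + b)) : (p + q) ^ 2 ≤ r := by
  have sedrakyan : (p + q) ^ 2 / (a + b) ≤ p ^ 2 / a + q ^ 2 / b := by
    simpa using Finset.sq_sum_div_le_sum_sq_div Finset.univ ![p, q] (g := ![a, b])
      (by simp [Fin.forall_fin_two, ha, hb])
  exact (div_le_div_iff_of_pos_right (add_pos ha hb)).1 (sedrakyan.trans h)

section OneDimensional

variable {G : Type*} [AddCommGroup G] [LinearOrder G] [IsOrderedAddMonoid G]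
  [TopologicalSpace G] [OrderTopology G] [MeasurableSpace G] [BorelSpace G]
  {μ : Measure G} [μ.IsAddLeftInvariant] [NullSingletonClass μ]

lemma measure_add_measure_le_measure_add_of_isCompact {X Y : Set G} (hX : IsCompact X)
    (hY : IsCompact Y) (hX₀ : X.Nonempty) (hY₀ : Y.Nonempty) : μ X + μ Y ≤ μ (X + Y) := by
  obtain ⟨m, hmX, hm⟩ := hX.exists_isGreatest hX₀
  obtain ⟨l, hlY, hl⟩ := hY.exists_isLeast hY₀
  have inter_subset : (l +ᵥ X) ∩ (m +ᵥ Y) ⊆ {m + l} := by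
    rintro _ ⟨⟨x, hx, rfl⟩, y, hy, hxy⟩
    simp only [vadd_eq_add] at hxy ⊢
    refine le_antisymm ?_ ?_
    · rw [add_comm m]
      gcongr
      exact hm hx
    · rw [← hxy]
      gcongr
      exact hl hy
  have disjoint : AEDisjoint μ (l +ᵥ X) (m +ᵥ Y) :=
    measure_mono_null inter_subset (measure_singleton _)
  calc μ X + μ Y = μ (l +ᵥ X) + μ (m +ᵥ Y) := by simp only [measure_vadd]
    _ = μ ((l +ᵥ X) ∪ (m +ᵥ Y)) :=
        (measure_union₀ (hY.measurableSet.const_vadd m).nullMeasurableSet disjoint).symm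
    _ ≤ μ (X + Y) := measure_mono <| union_subset
        (add_comm Y X ▸ vadd_set_subset_add hlY) (vadd_set_subset_add hmX)

lemma measure_add_measure_le_measure_add [μ.InnerRegular] {X Y : Set G} (hX : MeasurableSet X)
    (hY : MeasurableSet Y) (hX₀ : X.Nonempty) (hY₀ : Y.Nonempty) :
    μ X + μ Y ≤ μ (X + Y) := by
  obtain ⟨x, hx⟩ := hX₀
  obtain ⟨y, hy⟩ := hY₀
  rw [hX.measure_eq_iSup_isCompact, hY.measure_eq_iSup_isCompact]
  simp only [iSup_and']
  refine ENNReal.biSup_add_biSup_le' ⟨∅, empty_subset X, isCompact_empty⟩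
    ⟨∅, empty_subset Y, isCompact_empty⟩ ?_
  rintro K ⟨hKX, hK⟩ L ⟨hLY, hL⟩
  calc μ K + μ L ≤ μ (insert x K) + μ (insert y L) := by
        gcongr <;> exact subset_insert _ _
    _ ≤ μ (insert x K + insert y L) :=
        measure_add_measure_le_measure_add_of_isCompact (hK.insert x) (hL.insert y)
          (insert_nonempty x K) (insert_nonempty y L)
    _ ≤ μ (X + Y) :=
        measure_mono (add_subset_add (insert_subset hx hKX) (insert_subset hy hLY))

end OneDimensional

section LayerCake

lemma lintegral_ofReal_eq_setLIntegral_measure_lt {α : Type*} [MeasurableSpace α] {μ : Measure α}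
    {f : α → ℝ} {c : ℝ} (hf : AEMeasurable f μ) (hf₀ : 0 ≤ f) (hfc : ∀ x, f x ≤ c) :
    ∫⁻ x, ENNReal.ofReal (f x) ∂μ = ∫⁻ t in Ioo 0 c, μ {x | t < f x} := by
  rw [lintegral_eq_lintegral_meas_lt μ (.of_forall hf₀) hf]
  have tail_eq_zero : ∫⁻ t in Ioi 0 \ Iio c, μ {x | t < f x} = 0 :=
    setLIntegral_eq_zero (measurableSet_Ioi.diff measurableSet_Iio) fun t ht => by
      simp only [not_lt.2 ((hfc _).trans (not_lt.1 ht.2)), ofPred_false, measure_empty,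
        Pi.zero_apply]
  rw [← lintegral_inter_add_sdiff _ (Ioi 0) measurableSet_Iio, tail_eq_zero, add_zero,
    Ioi_inter_Iio]

variable {G : Type*} [AddCommGroup G] [LinearOrder G] [IsOrderedAddMonoid G]
  [TopologicalSpace G] [OrderTopology G] [MeasurableSpace G] [BorelSpace G]
  {μ : Measure G} [μ.IsAddLeftInvariant] [NullSingletonClass μ] [μ.InnerRegular]

lemma lintegral_add_lintegral_le_of_min_le {f g h : G → ℝ} {c : ℝ} (hf : Measurable f)
    (hg : Measurable g) (hh : AEMeasurable h μ) (hf₀ : 0 ≤ f) (hg₀ : 0 ≤ g) (hh₀ : 0 ≤ h)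
    (hfc : IsLUB (range f) c) (hgc : IsLUB (range g) c)
    (hmin : ∀ x y, min (f x) (g y) ≤ h (x + y)) :
    ∫⁻ x, ENNReal.ofReal (f x) ∂μ + ∫⁻ x, ENNReal.ofReal (g x) ∂μ ≤
      ∫⁻ x, ENNReal.ofReal (h x) ∂μ := by
  have superlevel_add_subset (t : ℝ) :
      {x | t < f x} + {y | t < g y} ⊆ {z | t < h z} := by
    rintro _ ⟨x, hx, y, hy, rfl⟩
    exact (lt_min hx hy).trans_le (hmin x y)
  have superlevel_nonempty {k : G → ℝ} (hkc : IsLUB (range k) c) {t : ℝ} (ht : t < c) :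
      {x | t < k x}.Nonempty := by
    obtain ⟨_, ⟨x, rfl⟩, hx⟩ := (lt_isLUB_iff hkc).1 ht
    exact ⟨x, hx⟩
  calc ∫⁻ x, ENNReal.ofReal (f x) ∂μ + ∫⁻ x, ENNReal.ofReal (g x) ∂μ
      = (∫⁻ t in Ioo 0 c, μ {x | t < f x}) + ∫⁻ t in Ioo 0 c, μ {x | t < g x} := by
        rw [lintegral_ofReal_eq_setLIntegral_measure_lt hf.aemeasurable hf₀
            fun x => hfc.1 (mem_range_self x),
          lintegral_ofReal_eq_setLIntegral_measure_lt hg.aemeasurable hg₀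
            fun x => hgc.1 (mem_range_self x)]
    _ ≤ ∫⁻ t in Ioo 0 c, (μ {x | t < f x} + μ {x | t < g x}) := le_lintegral_add _ _
    _ ≤ ∫⁻ t in Ioo 0 c, μ {x | t < h x} :=
        setLIntegral_mono' measurableSet_Ioo fun t ht =>
          (measure_add_measure_le_measure_add (measurableSet_lt measurable_const hf)
            (measurableSet_lt measurable_const hg) (superlevel_nonempty hfc ht.2)
            (superlevel_nonempty hgc ht.2)).trans (measure_mono (superlevel_add_subset t))
    _ ≤ ∫⁻ t in Ioi 0, μ {x | t < h x} := lintegral_mono_set Ioo_subset_Ioi_self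
    _ = ∫⁻ x, ENNReal.ofReal (h x) ∂μ :=
        (lintegral_eq_lintegral_meas_lt μ (.of_forall hh₀) hh).symm

end LayerCake

section Slices

/-- The measure of the vertical slice `{y | (x, y) ∈ A}`, as a real number (hence `0` if the slice
has infinite measure), so that the layer-cake formula for real functions applies to it. -/
noncomputable def sliceMeasure {α β : Type*} [MeasurableSpace β] (ν : Measure β)
    (A : Set (α × β)) (x : α) : ℝ :=
  ν.real (Prod.mk x ⁻¹' A)

lemma isCompact_preimage_prodMk {X Y : Type*} [TopologicalSpace X] [T1Space X]
    [TopologicalSpace Y] {A : Set (X × Y)} (hA : IsCompact A) (x : X) :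
    IsCompact (Prod.mk x ⁻¹' A) := by
  have isClosed_fiber : IsClosed (Prod.fst ⁻¹' {x} : Set (X × Y)) :=
    isClosed_singleton.preimage continuous_fst
  convert (hA.inter_right isClosed_fiber).image continuous_snd
  ext y
  simp

lemma preimage_prodMk_add_subset {M N : Type*} [Add M] [Add N] (A B : Set (M × N)) (x y : M) :
    Prod.mk x ⁻¹' A + Prod.mk y ⁻¹' B ⊆ Prod.mk (x + y) ⁻¹' (A + B) := by
  rintro _ ⟨u, hu, v, hv, rfl⟩
  exact ⟨(x, u), hu, (y, v), hv, rfl⟩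

variable {α β : Type*} [MeasurableSpace β] {ν : Measure β} {A : Set (α × β)}

lemma sliceMeasure_nonneg : 0 ≤ sliceMeasure ν A := fun _ => measureReal_nonneg

section Topological

variable [TopologicalSpace α] [TopologicalSpace β] [IsFiniteMeasureOnCompacts ν]

lemma measure_preimage_prodMk_ne_top [T1Space α] (hA : IsCompact A) (x : α) :
    ν (Prod.mk x ⁻¹' A) ≠ ∞ :=
  (isCompact_preimage_prodMk hA x).measure_lt_top.ne

lemma bddAbove_range_sliceMeasure (hA : IsCompact A) : BddAbove (range (sliceMeasure ν A)) := by
  refine ⟨ν.real (Prod.snd '' A), ?_⟩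
  rintro _ ⟨x, rfl⟩
  exact measureReal_mono (fun y hy => ⟨(x, y), hy, rfl⟩)
    (hA.image continuous_snd).measure_lt_top.ne

end Topological

variable [MeasurableSpace α] [SFinite ν] {μ : Measure α}

lemma measurable_sliceMeasure (hA : MeasurableSet A) : Measurable (sliceMeasure ν A) :=
  (measurable_measure_prodMk_left hA).ennreal_toReal

lemma lintegral_ofReal_sliceMeasure (hA : MeasurableSet A)
    (hfin : ∀ x, ν (Prod.mk x ⁻¹' A) ≠ ∞) :
    ∫⁻ x, ENNReal.ofReal (sliceMeasure ν A x) ∂μ = μ.prod ν A := by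
  rw [Measure.prod_apply hA]
  exact lintegral_congr fun x => ofReal_measureReal (hfin x)

lemma lintegral_ofReal_sliceMeasure_div (hA : MeasurableSet A)
    (hfin : ∀ x, ν (Prod.mk x ⁻¹' A) ≠ ∞) (hA_top : μ.prod ν A ≠ ∞) {c : ℝ} (hc : 0 < c) :
    ∫⁻ x, ENNReal.ofReal (sliceMeasure ν A x / c) ∂μ =
      ENNReal.ofReal ((μ.prod ν).real A / c) := by
  simp_rw [ENNReal.ofReal_div_of_pos hc, div_eq_mul_inv]
  rw [lintegral_mul_const' _ _ (by simpa using hc), lintegral_ofReal_sliceMeasure hA hfin,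
    ofReal_measureReal hA_top]

lemma iSup_sliceMeasure_pos (hA : MeasurableSet A) (hfin : ∀ x, ν (Prod.mk x ⁻¹' A) ≠ ∞)
    (hbdd : BddAbove (range (sliceMeasure ν A))) (hA₀ : μ.prod ν A ≠ 0) :
    0 < ⨆ x, sliceMeasure ν A x := by
  contrapose! hA₀
  rw [← lintegral_ofReal_sliceMeasure hA hfin]
  simp only [ENNReal.ofReal_of_nonpos ((le_ciSup hbdd _).trans hA₀), lintegral_zero]

end Slices

section SlicesOfSum

variable {M H : Type*} [Add M] [TopologicalSpace M] [ContinuousAdd M] [T1Space M]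
  [AddCommGroup H] [LinearOrder H] [IsOrderedAddMonoid H]
  [TopologicalSpace H] [OrderTopology H] [MeasurableSpace H] [BorelSpace H]
  {ν : Measure H} [ν.IsAddLeftInvariant] [NullSingletonClass ν] [IsFiniteMeasureOnCompacts ν]
  {A B : Set (M × H)}

lemma sliceMeasure_add_sliceMeasure_le (hA : IsCompact A) (hB : IsCompact B) {x y : M}
    (hx : (Prod.mk x ⁻¹' A).Nonempty) (hy : (Prod.mk y ⁻¹' B).Nonempty) :
    sliceMeasure ν A x + sliceMeasure ν B y ≤ sliceMeasure ν (A + B) (x + y) := by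
  rw [sliceMeasure, sliceMeasure, measureReal_def, measureReal_def, ← ENNReal.toReal_add
    (measure_preimage_prodMk_ne_top hA x) (measure_preimage_prodMk_ne_top hB y)]
  refine ENNReal.toReal_mono (measure_preimage_prodMk_ne_top (hA.add hB) (x + y)) ?_
  calc ν (Prod.mk x ⁻¹' A) + ν (Prod.mk y ⁻¹' B)
      ≤ ν (Prod.mk x ⁻¹' A + Prod.mk y ⁻¹' B) :=
        measure_add_measure_le_measure_add_of_isCompact (isCompact_preimage_prodMk hA x)
          (isCompact_preimage_prodMk hB y) hx hy
    _ ≤ ν (Prod.mk (x + y) ⁻¹' (A + B)) :=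
        measure_mono (preimage_prodMk_add_subset A B x y)

lemma min_sliceMeasure_div_le (hA : IsCompact A) (hB : IsCompact B) {a b : ℝ} (ha : 0 < a)
    (hb : 0 < b) (x y : M) :
    min (sliceMeasure ν A x / a) (sliceMeasure ν B y / b) ≤
      sliceMeasure ν (A + B) (x + y) / (a + b) := by
  set t := min (sliceMeasure ν A x / a) (sliceMeasure ν B y / b)
  rcases le_or_gt t 0 with ht | ht
  · exact ht.trans (div_nonneg (sliceMeasure_nonneg _) (add_pos ha hb).le)
  · have hx : t * a ≤ sliceMeasure ν A x := (le_div_iff₀ ha).1 (min_le_left _ _)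
    have hy : t * b ≤ sliceMeasure ν B y := (le_div_iff₀ hb).1 (min_le_right _ _)
    have slice_nonempty_A : (Prod.mk x ⁻¹' A).Nonempty :=
      nonempty_of_measureReal_ne_zero ((mul_pos ht ha).trans_le hx).ne'
    have slice_nonempty_B : (Prod.mk y ⁻¹' B).Nonempty :=
      nonempty_of_measureReal_ne_zero ((mul_pos ht hb).trans_le hy).ne'
    rw [le_div_iff₀ (add_pos ha hb), mul_add]
    exact (add_le_add hx hy).trans <|
      sliceMeasure_add_sliceMeasure_le hA hB slice_nonempty_A slice_nonempty_B

end SlicesOfSum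

section BrunnMinkowski

variable {G H : Type*}
  [AddCommGroup G] [LinearOrder G] [IsOrderedAddMonoid G]
  [TopologicalSpace G] [OrderTopology G] [MeasurableSpace G] [BorelSpace G]
  [AddCommGroup H] [LinearOrder H] [IsOrderedAddMonoid H]
  [TopologicalSpace H] [OrderTopology H] [MeasurableSpace H] [BorelSpace H]
  [SecondCountableTopologyEither G H]
  {μ : Measure G} [μ.IsAddLeftInvariant] [NullSingletonClass μ] [IsFiniteMeasureOnCompacts μ]
  [μ.InnerRegular]
  {ν : Measure H} [ν.IsAddLeftInvariant] [NullSingletonClass ν] [IsFiniteMeasureOnCompacts ν]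
  [SFinite ν] {A B : Set (G × H)}

lemma measureReal_prod_div_add_div_le (hA : IsCompact A) (hB : IsCompact B) {a b : ℝ} (ha : 0 < a)
    (hb : 0 < b) (hAa : IsLUB (range (sliceMeasure ν A)) a)
    (hBb : IsLUB (range (sliceMeasure ν B)) b) :
    (μ.prod ν).real A / a + (μ.prod ν).real B / b ≤ (μ.prod ν).real (A + B) / (a + b) := by
  have hab := add_pos ha hb
  have normalized_nonneg (K : Set (G × H)) {c : ℝ} (hc : 0 < c) :
      0 ≤ fun x => sliceMeasure ν K x / c :=
    fun x => div_nonneg (sliceMeasure_nonneg x) hc.le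
  have normalized_measurable {K : Set (G × H)} (hK : IsCompact K) (c : ℝ) :
      Measurable fun x => sliceMeasure ν K x / c :=
    (measurable_sliceMeasure hK.measurableSet).div_const c
  have lintegral_normalized {K : Set (G × H)} (hK : IsCompact K) {c : ℝ} (hc : 0 < c) :
      ∫⁻ x, ENNReal.ofReal (sliceMeasure ν K x / c) ∂μ =
        ENNReal.ofReal ((μ.prod ν).real K / c) :=
    lintegral_ofReal_sliceMeasure_div hK.measurableSet (measure_preimage_prodMk_ne_top hK)
      hK.measure_lt_top.ne hc
  have lintegral_le := lintegral_add_lintegral_le_of_min_le (μ := μ) (normalized_measurable hA a)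
    (normalized_measurable hB b) (normalized_measurable (hA.add hB) (a + b)).aemeasurable
    (normalized_nonneg A ha) (normalized_nonneg B hb) (normalized_nonneg (A + B) hab)
    (isLUB_range_div_self ha hAa) (isLUB_range_div_self hb hBb)
    (min_sliceMeasure_div_le hA hB ha hb)
  rwa [lintegral_normalized hA ha, lintegral_normalized hB hb, lintegral_normalized (hA.add hB) hab,
    ← ENNReal.ofReal_add (by positivity) (by positivity),
    ENNReal.ofReal_le_ofReal_iff (by positivity)] at lintegral_le

lemma sqrt_measureReal_prod_add_sqrt_le_of_ne_zero (hA : IsCompact A) (hB : IsCompact B)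
    (hA₀ : μ.prod ν A ≠ 0) (hB₀ : μ.prod ν B ≠ 0) :
    √((μ.prod ν).real A) + √((μ.prod ν).real B) ≤ √((μ.prod ν).real (A + B)) := by
  have iSup_pos {K : Set (G × H)} (hK : IsCompact K) (hK₀ : μ.prod ν K ≠ 0) :
      0 < ⨆ x, sliceMeasure ν K x :=
    iSup_sliceMeasure_pos hK.measurableSet (measure_preimage_prodMk_ne_top hK)
      (bddAbove_range_sliceMeasure hK) hK₀
  have normalized := measureReal_prod_div_add_div_le (μ := μ) hA hB (iSup_pos hA hA₀)
    (iSup_pos hB hB₀) (isLUB_ciSup (bddAbove_range_sliceMeasure hA))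
    (isLUB_ciSup (bddAbove_range_sliceMeasure hB))
  refine Real.le_sqrt_of_sq_le <| sq_add_le_of_sq_div_add_sq_div_le (iSup_pos hA hA₀)
    (iSup_pos hB hB₀) ?_
  simpa only [Real.sq_sqrt measureReal_nonneg] using normalized

theorem stmt_16_general [SFinite μ] (hA : IsCompact A) (hB : IsCompact B) (hA₀ : A.Nonempty)
    (hB₀ : B.Nonempty) :
    √((μ.prod ν).real A) + √((μ.prod ν).real B) ≤ √((μ.prod ν).real (A + B)) := by
  have hAB := (hA.add hB).measure_lt_top (μ := μ.prod ν).ne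
  by_cases hμA : μ.prod ν A = 0
  · rw [measureReal_def, hμA, ENNReal.toReal_zero, Real.sqrt_zero, zero_add]
    exact Real.sqrt_le_sqrt <|
      ENNReal.toReal_mono hAB (measure_le_measure_add_of_nonempty_left hA₀)
  by_cases hμB : μ.prod ν B = 0
  · rw [measureReal_def _ B, hμB, ENNReal.toReal_zero, Real.sqrt_zero, add_zero]
    exact Real.sqrt_le_sqrt <|
      ENNReal.toReal_mono hAB (add_comm B A ▸ measure_le_measure_add_of_nonempty_left hB₀)
  exact sqrt_measureReal_prod_add_sqrt_le_of_ne_zero hA hB hμA hμB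

end BrunnMinkowski

lemma IsBrickRegion.isCompact {A : Set (ℝ × ℝ)} (hA : IsBrickRegion A) : IsCompact A := by
  obtain ⟨N, R, -, hR, -, rfl⟩ := hA
  refine isCompact_iUnion fun i => ?_
  obtain ⟨x₁, x₂, y₁, y₂, -, -, hRi⟩ := hR i
  exact hRi ▸ isCompact_Icc.prod isCompact_Icc

lemma IsBrickRegion.nonempty {A : Set (ℝ × ℝ)} (hA : IsBrickRegion A) : A.Nonempty := by
  obtain ⟨N, R, hN, hR, -, rfl⟩ := hA
  obtain ⟨x₁, x₂, y₁, y₂, hx, hy, hR₀⟩ := hR ⟨0, hN⟩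
  exact ⟨(x₁, y₁), mem_iUnion.2 ⟨⟨0, hN⟩,
    hR₀ ▸ ⟨left_mem_Icc.2 hx.le, left_mem_Icc.2 hy.le⟩⟩⟩

/-- The Brunn–Minkowski inequality for brick regions in the plane. -/
theorem stmt_16 (A B : Set (ℝ × ℝ)) (hA : IsBrickRegion A) (hB : IsBrickRegion B) :
    Real.sqrt (volume (A + B)).toReal ≥
      Real.sqrt (volume A).toReal + Real.sqrt (volume B).toReal :=
  stmt_16_general hA.isCompact hB.isCompact hA.nonempty hB.nonempty
end

section
/- Let P and Q be convex polytopes in ℝⁿ (convex hulls of nonempty finite sets), and let λ, λ', μ, μ' be positive real numbers. Then for every nonzero u ∈ ℝⁿ, the face of λP + μQ in direction u and the face of λ'P + μ'Q in direction u have the same dimension, i.e. their affine spans have equal dimension. In particular, λP + μQ and λ'P + μ'Q are strongly isomorphic. -/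
open Matrix
open scoped Pointwise

/-- The face of a set `K ⊆ ℝⁿ` in direction `u`:
`F(K, u) = {x ∈ K : ⟨u, x⟩ = sup_{y ∈ K} ⟨u, y⟩}`. -/
noncomputable def faceIn {n : ℕ} (K : Set (Fin n → ℝ)) (u : Fin n → ℝ) :
    Set (Fin n → ℝ) :=
  {x ∈ K | u ⬝ᵥ x = sSup ((fun y => u ⬝ᵥ y) '' K)}

/-!
A linear functional attains its supremum over a Minkowski sum exactly at the sums of points where it
attains its suprema over the summands, so `F(λP + μQ, u) = λF(P, u) + μF(Q, u)` for `λ, μ > 0`.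
The direction of the affine span of a Minkowski sum of nonempty sets is the sum of the two
directions, and nonzero scalars do not change a direction; hence the direction of `F(λP + μQ, u)`
does not depend on `λ` and `μ`.
-/

section VectorSpan

variable {k V : Type*} [Ring k] [AddCommGroup V] [Module k V]

theorem vectorSpan_smul_set {a : k} (ha : IsUnit a) (s : Set V) :
    vectorSpan k (a • s) = vectorSpan k s := by
  have smul_sub_smul : a • s -ᵥ a • s = a • (s -ᵥ s) :=
    (Set.image_image2_distrib fun x y => smul_sub a x y).symm
  rw [vectorSpan_def, smul_sub_smul, Submodule.span_smul_eq_of_isUnit _ _ ha, vectorSpan_def]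

theorem vectorSpan_add {s t : Set V} (hs : s.Nonempty) (ht : t.Nonempty) :
    vectorSpan k (s + t) = vectorSpan k s ⊔ vectorSpan k t := by
  let addMap : V × V →ₗ[k] V := LinearMap.id.coprod LinearMap.id
  have image_prod : addMap.toAffineMap '' s ×ˢ t = s + t := Set.add_image_prod
  rw [← image_prod, ← AffineMap.map_vectorSpan, vectorSpan_prod_eq hs ht,
    LinearMap.toAffineMap_linear, LinearMap.map_coprod_prod, Submodule.map_id, Submodule.map_id]

theorem vectorSpan_smul_add_smul_congr {a a' b b' : k} (ha : IsUnit a) (ha' : IsUnit a')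
    (hb : IsUnit b) (hb' : IsUnit b') (s t : Set V) :
    vectorSpan k (a • s + b • t) = vectorSpan k (a' • s + b' • t) := by
  obtain rfl | hs := s.eq_empty_or_nonempty
  · simp only [Set.smul_set_empty, Set.empty_add]
  obtain rfl | ht := t.eq_empty_or_nonempty
  · simp only [Set.smul_set_empty, Set.add_empty]
  rw [vectorSpan_add hs.smul_set ht.smul_set, vectorSpan_add hs.smul_set ht.smul_set,
    vectorSpan_smul_set ha, vectorSpan_smul_set ha', vectorSpan_smul_set hb,
    vectorSpan_smul_set hb']

end VectorSpan

section DotProduct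

variable {ι R : Type*} [Fintype ι]

theorem image_dotProduct_smul_set [CommSemiring R] (u : ι → R) (a : R) (K : Set (ι → R)) :
    (fun y => u ⬝ᵥ y) '' (a • K) = a • (fun y => u ⬝ᵥ y) '' K :=
  Set.image_smul_comm _ a K fun y => dotProduct_smul a u y

theorem image_dotProduct_add [NonUnitalNonAssocSemiring R] (u : ι → R) (K L : Set (ι → R)) :
    (fun y => u ⬝ᵥ y) '' (K + L) = (fun y => u ⬝ᵥ y) '' K + (fun y => u ⬝ᵥ y) '' L :=
  Set.image_image2_distrib fun x y => dotProduct_add u x y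

theorem bddAbove_image_dotProduct_of_isCompact {K : Set (ι → ℝ)} (hK : IsCompact K) (u : ι → ℝ) :
    BddAbove ((fun y => u ⬝ᵥ y) '' K) :=
  hK.bddAbove_image (Continuous.continuousOn (by fun_prop))

end DotProduct

section Face

variable {n : ℕ}

theorem faceIn_smul {a : ℝ} (ha : 0 < a) (K : Set (Fin n → ℝ)) (u : Fin n → ℝ) :
    faceIn (a • K) u = a • faceIn K u := by
  have sSup_smul : sSup ((fun y => u ⬝ᵥ y) '' (a • K)) = a * sSup ((fun y => u ⬝ᵥ y) '' K) := by
    rw [image_dotProduct_smul_set, Real.sSup_smul_of_nonneg ha.le, smul_eq_mul]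
  ext x
  obtain ⟨y, rfl⟩ : ∃ y, a • y = x := ⟨a⁻¹ • x, smul_inv_smul₀ ha.ne' x⟩
  rw [Set.smul_mem_smul_set_iff₀ ha.ne']
  simp only [faceIn, Set.mem_ofPred_eq, Set.smul_mem_smul_set_iff₀ ha.ne', sSup_smul,
    dotProduct_smul, smul_eq_mul, mul_right_inj' ha.ne']

variable {K L : Set (Fin n → ℝ)} {u : Fin n → ℝ}

theorem faceIn_add (hK : BddAbove ((fun y => u ⬝ᵥ y) '' K))
    (hL : BddAbove ((fun y => u ⬝ᵥ y) '' L)) :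
    faceIn (K + L) u = faceIn K u + faceIn L u := by
  obtain rfl | hKne := K.eq_empty_or_nonempty
  · simp [faceIn]
  obtain rfl | hLne := L.eq_empty_or_nonempty
  · simp [faceIn]
  have sSup_add : sSup ((fun y => u ⬝ᵥ y) '' (K + L)) =
      sSup ((fun y => u ⬝ᵥ y) '' K) + sSup ((fun y => u ⬝ᵥ y) '' L) := by
    rw [image_dotProduct_add, csSup_add (hKne.image _) hK (hLne.image _) hL]
  apply Set.Subset.antisymm
  · rintro _ ⟨⟨y, hy, z, hz, rfl⟩, hyz⟩
    have hy_le := le_csSup hK (Set.mem_image_of_mem _ hy)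
    have hz_le := le_csSup hL (Set.mem_image_of_mem _ hz)
    rw [sSup_add, dotProduct_add, add_eq_add_iff_eq_and_eq hy_le hz_le] at hyz
    exact Set.add_mem_add ⟨hy, hyz.1⟩ ⟨hz, hyz.2⟩
  · rintro _ ⟨y, ⟨hy, hy_max⟩, z, ⟨hz, hz_max⟩, rfl⟩
    exact ⟨Set.add_mem_add hy hz, by rw [sSup_add, dotProduct_add, hy_max, hz_max]⟩

theorem faceIn_smul_add_smul (hK : BddAbove ((fun y => u ⬝ᵥ y) '' K))
    (hL : BddAbove ((fun y => u ⬝ᵥ y) '' L)) {a b : ℝ} (ha : 0 < a) (hb : 0 < b) :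
    faceIn (a • K + b • L) u = a • faceIn K u + b • faceIn L u := by
  rw [faceIn_add, faceIn_smul ha, faceIn_smul hb]
  · rw [image_dotProduct_smul_set]
    exact hK.smul_of_nonneg ha.le
  · rw [image_dotProduct_smul_set]
    exact hL.smul_of_nonneg hb.le

end Face

theorem stmt_18_general {n : ℕ} {K L : Set (Fin n → ℝ)} {u : Fin n → ℝ}
    (hK : BddAbove ((fun y => u ⬝ᵥ y) '' K)) (hL : BddAbove ((fun y => u ⬝ᵥ y) '' L))
    {a a' b b' : ℝ} (ha : 0 < a) (ha' : 0 < a') (hb : 0 < b) (hb' : 0 < b') :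
    (affineSpan ℝ (faceIn (a • K + b • L) u)).direction =
      (affineSpan ℝ (faceIn (a' • K + b' • L) u)).direction := by
  rw [direction_affineSpan, direction_affineSpan, faceIn_smul_add_smul hK hL ha hb,
    faceIn_smul_add_smul hK hL ha' hb']
  exact vectorSpan_smul_add_smul_congr ha.ne'.isUnit ha'.ne'.isUnit hb.ne'.isUnit hb'.ne'.isUnit _ _

theorem stmt_18 {n : ℕ} (S T : Set (Fin n → ℝ))
    (hSfin : S.Finite) (hSne : S.Nonempty) (hTfin : T.Finite) (hTne : T.Nonempty)
    (lam lam' mu mu' : ℝ)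
    (hlam : 0 < lam) (hlam' : 0 < lam') (hmu : 0 < mu) (hmu' : 0 < mu') :
    ∀ u : Fin n → ℝ, u ≠ 0 →
      Module.finrank ℝ
        (affineSpan ℝ (faceIn (lam • convexHull ℝ S + mu • convexHull ℝ T) u)).direction =
      Module.finrank ℝ
        (affineSpan ℝ (faceIn (lam' • convexHull ℝ S + mu' • convexHull ℝ T) u)).direction := by
  intro u _
  rw [stmt_18_general (bddAbove_image_dotProduct_of_isCompact (hSfin.isCompact_convexHull ℝ) u)
    (bddAbove_image_dotProduct_of_isCompact (hTfin.isCompact_convexHull ℝ) u) hlam hlam' hmu hmu']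
end
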